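/- arXiv:math/0703416 — 4 statements merged into one kernel-verified Lean document; each statement's English description precedes it below -/
import Mathlib

section
/- Let P be a terminal simplicial reflexive d-polytope and F a facet of P such that there are exactly d vertices of P with ⟨u_F, ·⟩ = 0. If x is a lattice point of P with ⟨u_F, x⟩ = -1, then -x is a vertex of F. -/
/-!
Let `b₁, …, b_d` be the vertices of `F`; they form a basis and `u_F` is the sum of the dual basis
`b₁*, …, b_d*`. The facet neighbouring `F` across the ridge opposite to `bᵢ` has functional
`u_F - tᵢ bᵢ*` with an integer `tᵢ ≥ 1` and one new vertex `nᵢ` (`exists_neighbor`). A vertex `y`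
on level `0` of `F` with `bᵢ*(y) < 0` gives `u_F - tᵢ bᵢ*` a positive integral value at most `1`,
so `y = nᵢ` and `tᵢ bᵢ*(y) = -1` (`eq_neighbor`).

Every vertex on level `0` has a negative coordinate, so when there are `d` of them they are exactly
`n₁, …, n_d`, all distinct, and the only negative coordinate of `nᵢ` is the `i`-th one. Hence no
facet contains both `nᵢ` and `bᵢ`: a functional `g ≤ 1` on `P` with `g(bᵢ) = 1` has
`g(nᵢ) ≤ u_F(nᵢ) = 0`. Facet functionals are integral, so all facet inequalities hold at `nᵢ + bᵢ`,
which is therefore in `P`, on level `1`; by terminality it is a vertex `b_{σ(i)}` of `F`. Thus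
`nᵢ = b_{σ(i)} - bᵢ` and `tᵢ = 1` (`exists_sigma`).

Now let `x` be on level `-1`. Its negative coordinates all equal `-1`. If two of them, `i ≠ k`,
occurred, then `x` would lie on level `0` of the neighbouring facets `u_F - bᵢ*` and `u_F - b_k*`,
and applying `eq_neighbor` to those facets forces first `σ(k) ≠ i` and `σ(i) ≠ k`, and then
`x = n_k`, which is impossible. So there is one negative coordinate, and the others, nonnegative
with sum `0`, vanish: `x = -bᵢ`.

The polytope theory needed is elementary: a supporting functional can be moved in a given
direction until a new vertex becomes tight (`exists_step`). This yields the neighbouring facets and,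
together with Hahn–Banach, the description of `P` by its facet inequalities
(`mem_carrier_of_facets`).
-/


open Finset

/-- A point of `ℝ^d` is a lattice point if all of its coordinates are integers. -/
def IsLatticePt {d : ℕ} (x : Fin d → ℝ) : Prop := ∀ i, ∃ z : ℤ, x i = (z : ℝ)

/-- The pairing between `M_ℝ` and `N_ℝ`, both identified with `ℝ^d`. -/
noncomputable def pairing {d : ℕ} (u x : Fin d → ℝ) : ℝ := ∑ i, u i * x i

/-- The `i`-th standard basis vector of `ℝ^d`. -/
noncomputable def stdVec {d : ℕ} (i : Fin d) : Fin d → ℝ := Pi.single i 1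

/-- A polytope in `ℝ^d`, given by its finite vertex set (each listed point is
required to be an extreme point of the convex hull, i.e. a genuine vertex). -/
structure Polytope (d : ℕ) where
  verts : Finset (Fin d → ℝ)
  vertsExtreme : ∀ v ∈ verts,
    v ∈ Set.extremePoints ℝ (convexHull ℝ (verts : Set (Fin d → ℝ)))

namespace Polytope

variable {d : ℕ}

/-- The polytope as a subset of `ℝ^d`. -/
def carrier (P : Polytope d) : Set (Fin d → ℝ) :=
  convexHull ℝ (P.verts : Set (Fin d → ℝ))

/-- A proper face of `P`, cut out by a supporting hyperplane. -/
def IsFace (P : Polytope d) (F : Set (Fin d → ℝ)) : Prop :=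
  ∃ u : Fin d → ℝ, u ≠ 0 ∧ ∃ c : ℝ,
    (∀ x ∈ P.carrier, pairing u x ≤ c) ∧ F = {x ∈ P.carrier | pairing u x = c}

/-- A facet of `P`: a nonempty proper face of dimension `d - 1`. -/
def IsFacet (P : Polytope d) (F : Set (Fin d → ℝ)) : Prop :=
  P.IsFace F ∧ F.Nonempty ∧ Module.finrank ℝ (vectorSpan ℝ F) = d - 1

/-- The set of vertices of `P` lying on `F`. -/
def vertsOn (P : Polytope d) (F : Set (Fin d → ℝ)) : Set (Fin d → ℝ) :=
  {v | v ∈ P.verts ∧ v ∈ F}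

/-- `P` is simplicial if every facet has exactly `d` vertices. -/
def IsSimplicial (P : Polytope d) : Prop :=
  ∀ F, P.IsFacet F → (P.vertsOn F).ncard = d

/-- `P` is a lattice polytope. -/
def IsLattice (P : Polytope d) : Prop := ∀ v ∈ P.verts, IsLatticePt v

/-- `u` is the supporting functional `u_F` of the facet `F`, i.e. `⟨u, ·⟩ = 1` on `F`. -/
def IsUF (P : Polytope d) (F : Set (Fin d → ℝ)) (u : Fin d → ℝ) : Prop :=
  ∀ x ∈ F, pairing u x = 1

/-- `u` is the dual basis element `u_F^v`: it takes value `1` at the vertex `v` of `F`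
and `0` at all other vertices of `F`. -/
def IsDualBasisElt (P : Polytope d) (F : Set (Fin d → ℝ)) (v : Fin d → ℝ)
    (u : Fin d → ℝ) : Prop :=
  pairing u v = 1 ∧ ∀ w ∈ P.vertsOn F, w ≠ v → pairing u w = 0

/-- `P` is reflexive: it is a lattice polytope with `0` in its interior, and every
facet lies on a hyperplane `⟨u, ·⟩ = 1` with `u` integral (equivalently, the dual
polytope is a lattice polytope). -/
def IsReflexive (P : Polytope d) : Prop :=
  P.IsLattice ∧ 0 ∈ interior P.carrier ∧
    ∀ F, P.IsFacet F → ∃ u : Fin d → ℤ, P.IsUF F (fun i => (u i : ℝ))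

/-- `P` is terminal: the only lattice points of `P` are its vertices and the origin. -/
def IsTerminal (P : Polytope d) : Prop :=
  ∀ x ∈ P.carrier, IsLatticePt x → x = 0 ∨ x ∈ P.verts

/-- `F'` is the neighboring facet `N(F, v)`: the facet different from `F` containing
all vertices of `F` except `v`. -/
def IsNeighborFacet (P : Polytope d) (F : Set (Fin d → ℝ)) (v : Fin d → ℝ)
    (F' : Set (Fin d → ℝ)) : Prop :=
  P.IsFacet F' ∧ F' ≠ F ∧ ∀ w ∈ P.vertsOn F, w ≠ v → w ∈ F'

/-- `y` is the neighboring vertex `n(F, v)`: the unique vertex of `N(F, v)` not on `F`. -/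
def IsNeighborVertex (P : Polytope d) (F : Set (Fin d → ℝ)) (v : Fin d → ℝ)
    (y : Fin d → ℝ) : Prop :=
  ∃ F', P.IsNeighborFacet F v F' ∧ y ∈ P.vertsOn F' ∧ y ∉ F

/-- `F` is a special facet of `P`: the sum of all vertices of `P` is a nonnegative
linear combination of the vertices of `F`, i.e. `⟨u_F^w, ν_P⟩ ≥ 0` for every vertex
`w` of `F`. -/
def IsSpecialFacet (P : Polytope d) (F : Set (Fin d → ℝ)) : Prop :=
  P.IsFacet F ∧ ∀ w ∈ P.vertsOn F, ∀ uFw : Fin d → ℝ,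
    P.IsDualBasisElt F w uFw → 0 ≤ pairing uFw (∑ v ∈ P.verts, v)

end Polytope

/-- `S` is a `ℤ`-basis of the lattice `ℤ^d ⊆ ℝ^d`. -/
def IsLatticeBasis {d : ℕ} (S : Set (Fin d → ℝ)) : Prop :=
  ∃ v : Fin d → (Fin d → ℝ), Set.range v = S ∧
    ∀ x : Fin d → ℝ, (IsLatticePt x ↔ ∃ a : Fin d → ℤ, x = ∑ i, (a i : ℝ) • v i)

namespace FacetNeg

variable {d : ℕ}

/-! ### Facet functionals and their tight vertices -/

/-- The vertices of `P` at which the functional `u` takes the value `1`. -/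
def tight (P : Polytope d) (u : (Fin d → ℝ) →ₗ[ℝ] ℝ) : Set (Fin d → ℝ) :=
  {v | v ∈ P.verts ∧ u v = 1}

/-- `u` is the supporting functional of a facet not through the origin: it is at most `1` on `P`,
and the vertices where it equals `1` span the whole space. Facets are encoded by their
functionals, so that passing to a neighbouring facet is a modification of `u`. -/
def FacetFun (P : Polytope d) (u : (Fin d → ℝ) →ₗ[ℝ] ℝ) : Prop :=
  (∀ v ∈ P.verts, u v ≤ 1) ∧ Submodule.span ℝ (tight P u) = ⊤

/-- Pairing with a fixed vector, as a linear functional. -/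
noncomputable def pairL (u : Fin d → ℝ) : (Fin d → ℝ) →ₗ[ℝ] ℝ where
  toFun x := pairing u x
  map_add' x y := by simp [pairing, mul_add, Finset.sum_add_distrib]
  map_smul' c x := by
    simp only [pairing, Pi.smul_apply, smul_eq_mul, RingHom.id_apply, Finset.mul_sum]
    exact Finset.sum_congr rfl fun i _ => by ring

@[simp] lemma pairL_apply (u x : Fin d → ℝ) : pairL u x = pairing u x := rfl

lemma exists_pairL (f : (Fin d → ℝ) →ₗ[ℝ] ℝ) : ∃ u, pairL u = f := by
  refine ⟨fun i => f (Pi.single i 1), ?_⟩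
  refine LinearMap.pi_ext' fun i => LinearMap.ext_ring ?_
  simp [pairing, Pi.single_apply]

/-! ### The origin as an interior point -/

lemma le_on_carrier {P : Polytope d} (f : (Fin d → ℝ) →ₗ[ℝ] ℝ) {c : ℝ}
    (h : ∀ v ∈ P.verts, f v ≤ c) : ∀ x ∈ P.carrier, f x ≤ c := by
  intro x hx
  have : P.carrier ⊆ {x | f x ≤ c} :=
    convexHull_min (fun v hv => h v hv) (convex_halfSpace_le f.isLinear c)
  exact this hx

lemma vert_mem {P : Polytope d} {v : Fin d → ℝ} (hv : v ∈ P.verts) : v ∈ P.carrier :=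
  subset_convexHull ℝ _ hv

/-- A small multiple of every vector lies in `P`, the origin being interior. -/
lemma exists_smul_mem {P : Polytope d} (h0 : 0 ∈ interior P.carrier) (y : Fin d → ℝ) :
    ∃ ε : ℝ, 0 < ε ∧ ε • y ∈ P.carrier ∧ (-ε) • y ∈ P.carrier := by
  have hc : Filter.Tendsto (fun ε : ℝ => ε • y) (nhds 0) (nhds 0) := by
    have : Continuous (fun ε : ℝ => ε • y) := by fun_prop
    simpa using this.tendsto 0
  have hn := hc (mem_interior_iff_mem_nhds.1 h0)
  obtain ⟨r, hr, hb⟩ := Metric.mem_nhds_iff.1 hn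
  refine ⟨r / 2, by positivity, ?_, ?_⟩
  · exact hb (by simp [abs_of_pos hr]; linarith)
  · exact hb (by simp [abs_of_pos hr]; linarith)

lemma exists_pos_vert {P : Polytope d} (h0 : 0 ∈ interior P.carrier)
    {w : (Fin d → ℝ) →ₗ[ℝ] ℝ} (hw : w ≠ 0) : ∃ v ∈ P.verts, 0 < w v := by
  by_contra! h
  apply hw
  have hle := le_on_carrier w h
  refine LinearMap.ext fun y => ?_
  obtain ⟨ε, hε, h1, h2⟩ := exists_smul_mem h0 y
  have h1 := hle _ h1
  have h2 := hle _ h2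
  simp only [map_smul, smul_eq_mul] at h1 h2
  rw [LinearMap.zero_apply]
  nlinarith

lemma zero_notMem_verts {P : Polytope d} (h0 : 0 ∈ interior P.carrier) (hd : 0 < d) :
    (0 : Fin d → ℝ) ∉ P.verts := by
  intro h
  have hext := P.vertsExtreme 0 h
  let y : Fin d → ℝ := Pi.single ⟨0, hd⟩ 1
  obtain ⟨ε, hε, h1, h2⟩ := exists_smul_mem h0 y
  have := hext.2 h1 h2 ⟨1 / 2, 1 / 2, by norm_num, by norm_num, by norm_num, by
    rw [← smul_add, ← add_smul]; simp⟩
  have h3 := congrFun this ⟨0, hd⟩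
  simp [y] at h3
  exact hε.ne' h3

/-! ### Tilting supporting functionals; the facet description of a polytope -/

/-- Moving a supporting functional `u` in a direction `w` that is nonpositive at the tight
vertices: the motion stops exactly when a vertex with `w v > 0` becomes tight. -/
lemma exists_step {P : Polytope d} (h0 : 0 ∈ interior P.carrier)
    {u w : (Fin d → ℝ) →ₗ[ℝ] ℝ} (hu : ∀ v ∈ P.verts, u v ≤ 1) (hw : w ≠ 0)
    (hwt : ∀ v ∈ tight P u, w v ≤ 0) :
    ∃ t : ℝ, 0 < t ∧ (∀ v ∈ P.verts, (u + t • w) v ≤ 1) ∧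
      ∃ n ∈ P.verts, 0 < w n ∧ (u + t • w) n = 1 := by
  classical
  have hne : (P.verts.filter fun v => 0 < w v).Nonempty := by
    obtain ⟨v, hv, h⟩ := exists_pos_vert h0 hw
    exact ⟨v, by simp [hv, h]⟩
  obtain ⟨n, hn, hmin⟩ := Finset.exists_min_image _ (fun v => (1 - u v) / w v) hne
  simp only [Finset.mem_filter] at hn hmin
  obtain ⟨hn, hwn⟩ := hn
  have hun : u n < 1 := lt_of_le_of_ne (hu n hn) fun h => by
    have := hwt n ⟨hn, h⟩
    linarith
  have htpos : 0 < (1 - u n) / w n := div_pos (by linarith) hwn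
  refine ⟨(1 - u n) / w n, htpos, fun v hv => ?_, n, hn, hwn, ?_⟩
  · simp only [LinearMap.add_apply, LinearMap.smul_apply, smul_eq_mul]
    by_cases h : 0 < w v
    · have := hmin v ⟨hv, h⟩
      rw [le_div_iff₀ h] at this
      linarith
    · have := hu v hv
      nlinarith
  · simp only [LinearMap.add_apply, LinearMap.smul_apply, smul_eq_mul]
    field_simp
    ring

lemma finite_tight (P : Polytope d) (u : (Fin d → ℝ) →ₗ[ℝ] ℝ) : (tight P u).Finite :=
  P.verts.finite_toSet.subset fun _ h => h.1

/-- Any supporting functional that exceeds `1` at `y` can be pushed, without decreasing its value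
at `y`, until its tight vertices span; the induction is on the number of vertices that are
not tight. -/
lemma exists_facetFun {P : Polytope d} (h0 : 0 ∈ interior P.carrier) (y : Fin d → ℝ) (m : ℕ) :
    ∀ u : (Fin d → ℝ) →ₗ[ℝ] ℝ, (∀ v ∈ P.verts, u v ≤ 1) → 1 < u y →
      P.verts.card ≤ (tight P u).ncard + m → ∃ g, FacetFun P g ∧ 1 < g y := by
  induction m with
  | zero =>
    intro u hu huy hc
    by_cases hs : Submodule.span ℝ (tight P u) = ⊤
    · exact ⟨u, ⟨hu, hs⟩, huy⟩
    exfalso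
    obtain ⟨w, hw, hwk⟩ := Submodule.exists_le_ker_of_lt_top _ (lt_top_iff_ne_top.2 hs)
    obtain ⟨v, hv, hwv⟩ := exists_pos_vert h0 hw
    have : tight P u = P.verts := by
      refine Set.eq_of_subset_of_ncard_le (fun _ h => h.1) ?_ P.verts.finite_toSet
      simpa using hc
    have : w v = 0 := hwk (Submodule.subset_span (this ▸ hv))
    linarith
  | succ m ih =>
    intro u hu huy hc
    by_cases hs : Submodule.span ℝ (tight P u) = ⊤
    · exact ⟨u, ⟨hu, hs⟩, huy⟩
    obtain ⟨w, hw, hwk⟩ : ∃ w : (Fin d → ℝ) →ₗ[ℝ] ℝ, w ≠ 0 ∧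
        Submodule.span ℝ (tight P u) ≤ LinearMap.ker w ∧ 0 ≤ w y := by
      obtain ⟨w, hw, hwk⟩ := Submodule.exists_le_ker_of_lt_top _ (lt_top_iff_ne_top.2 hs)
      rcases le_total 0 (w y) with h | h
      · exact ⟨w, hw, hwk, h⟩
      · refine ⟨-w, neg_ne_zero.2 hw, fun z hz => ?_, by simpa using h⟩
        have := hwk hz
        simp only [LinearMap.mem_ker] at this
        simp [this]
    have hw0 : ∀ v ∈ tight P u, w v = 0 := fun v hv => hwk.1 (Submodule.subset_span hv)
    obtain ⟨t, ht, hle, n, hn, hwn, hn1⟩ := exists_step h0 hu hw fun v hv => (hw0 v hv).le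
    refine ih (u + t • w) hle ?_ ?_
    · have := mul_nonneg ht.le hwk.2
      simp only [LinearMap.add_apply, LinearMap.smul_apply, smul_eq_mul]
      linarith
    · have hlt : (tight P u).ncard < (tight P (u + t • w)).ncard := by
        refine Set.ncard_lt_ncard ⟨fun v hv => ⟨hv.1, ?_⟩, fun h => ?_⟩ (finite_tight _ _)
        · simp [hw0 v hv, hv.2]
        · have := hw0 n (h ⟨hn, hn1⟩)
          linarith
      omega

/-- A polytope with the origin in its interior is cut out by its facet inequalities. -/
lemma mem_carrier_of_facets {P : Polytope d} (h0 : 0 ∈ interior P.carrier) (y : Fin d → ℝ)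
    (h : ∀ g, FacetFun P g → g y ≤ 1) : y ∈ P.carrier := by
  by_contra hy
  have hcl : IsClosed P.carrier := (P.verts.finite_toSet.isCompact_convexHull (𝕜 := ℝ)).isClosed
  obtain ⟨f, s, hf, hs⟩ := geometric_hahn_banach_closed_point (convex_convexHull ℝ _) hcl hy
  have hs0 : 0 < s := by simpa using hf 0 (interior_subset h0)
  obtain ⟨g, hg, hgy⟩ := exists_facetFun h0 y P.verts.card (s⁻¹ • (f : (Fin d → ℝ) →ₗ[ℝ] ℝ))
    (fun v hv => by
      have := hf v (vert_mem hv)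
      simp only [LinearMap.smul_apply, ContinuousLinearMap.coe_coe, smul_eq_mul]
      rw [inv_mul_le_iff₀ hs0]; linarith)
    (by
      simp only [LinearMap.smul_apply, ContinuousLinearMap.coe_coe, smul_eq_mul]
      rw [lt_inv_mul_iff₀ hs0]; linarith) (by omega)
  exact absurd (h g hg) (not_le.2 hgy)

/-! ### Facets and facet functionals -/

/-- A point of `P` at which a supporting functional is `1` is a combination of tight vertices. -/
lemma mem_span_tight {P : Polytope d} {u : (Fin d → ℝ) →ₗ[ℝ] ℝ} (hu : ∀ v ∈ P.verts, u v ≤ 1)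
    {x : Fin d → ℝ} (hx : x ∈ P.carrier) (hux : u x = 1) :
    x ∈ Submodule.span ℝ (tight P u) := by
  obtain ⟨a, ha, hs, hc⟩ := Finset.mem_convexHull'.1 hx
  have hz : ∑ v ∈ P.verts, a v * (1 - u v) = 0 := by
    have : u x = ∑ v ∈ P.verts, a v * u v := by rw [← hc]; simp
    simp only [mul_sub, mul_one, Finset.sum_sub_distrib]
    rw [hs, ← this, hux, sub_self]
  rw [Finset.sum_eq_zero_iff_of_nonneg
    (fun v hv => mul_nonneg (ha v hv) (by linarith [hu v hv]))] at hz
  rw [← hc]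
  refine Submodule.sum_mem _ fun v hv => ?_
  rcases mul_eq_zero.1 (hz v hv) with h | h
  · simp [h]
  · exact Submodule.smul_mem _ _ (Submodule.subset_span ⟨hv, by linarith⟩)

lemma facetFun_isFacet {P : Polytope d} (hd : 0 < d) {u : Fin d → ℝ}
    (hu : FacetFun P (pairL u)) : P.IsFacet {x ∈ P.carrier | pairing u x = 1} := by
  have hnt : Nontrivial (Fin d → ℝ) := by
    have : Nonempty (Fin d) := ⟨⟨0, hd⟩⟩
    infer_instance
  obtain ⟨v, hv⟩ : (tight P (pairL u)).Nonempty := by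
    by_contra h
    have h2 := hu.2
    rw [Set.not_nonempty_iff_eq_empty.1 h, Submodule.span_empty] at h2
    exact bot_ne_top h2
  have hu0 : pairL u ≠ 0 := by
    intro h
    have := hv.2
    simp [h] at this
  refine ⟨⟨u, ?_, 1, ?_, rfl⟩, ⟨v, vert_mem hv.1, hv.2⟩, ?_⟩
  · rintro rfl
    exact hu0 (by ext; simp [pairing])
  · exact le_on_carrier (pairL u) hu.1
  · set F := {x ∈ P.carrier | pairing u x = 1} with hF
    have hvF : v ∈ F := ⟨vert_mem hv.1, hv.2⟩
    have hk : Module.finrank ℝ (LinearMap.ker (pairL u)) + 1 = d := by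
      have := Module.Dual.finrank_ker_add_one_of_ne_zero hu0
      simpa using this
    have hle : vectorSpan ℝ F ≤ LinearMap.ker (pairL u) := by
      rw [vectorSpan_def, Submodule.span_le]
      rintro _ ⟨a, ha, b, hb, rfl⟩
      have h1 : pairL u a = 1 := ha.2
      have h2 : pairL u b = 1 := hb.2
      simp only [SetLike.mem_coe, LinearMap.mem_ker, vsub_eq_sub, map_sub, h1, h2, sub_self]
    have h1 := Submodule.finrank_mono hle
    have htop : (⊤ : Submodule ℝ (Fin d → ℝ)) ≤ vectorSpan ℝ F ⊔ Submodule.span ℝ {v} := by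
      rw [← hu.2, Submodule.span_le]
      intro z hz
      have hzv : z - v ∈ vectorSpan ℝ F := vsub_mem_vectorSpan ℝ
        (show z ∈ F from ⟨vert_mem hz.1, hz.2⟩) hvF
      have := Submodule.add_mem_sup hzv (Submodule.mem_span_singleton_self (R := ℝ) v)
      simpa using this
    have h2 := Submodule.finrank_mono htop
    have h3 := Submodule.finrank_add_le_finrank_add_finrank (vectorSpan ℝ F)
      (Submodule.span ℝ {v})
    have h4 : Module.finrank ℝ (Submodule.span ℝ {v}) ≤ 1 := by
      simpa using finrank_span_le_card (R := ℝ) ({v} : Set (Fin d → ℝ))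
    simp only [finrank_top, Module.finrank_fintype_fun_eq_card, Fintype.card_fin] at h2
    omega

lemma vertsOn_eq {P : Polytope d} (u : Fin d → ℝ) :
    P.vertsOn {x ∈ P.carrier | pairing u x = 1} = tight P (pairL u) := by
  ext v
  exact ⟨fun h => ⟨h.1, h.2.2⟩, fun h => ⟨h.1, vert_mem h.1, h.2⟩⟩

lemma ncard_tight {P : Polytope d} (hd : 0 < d) (hsimp : P.IsSimplicial)
    {u : (Fin d → ℝ) →ₗ[ℝ] ℝ} (hu : FacetFun P u) : (tight P u).ncard = d := by
  obtain ⟨u, rfl⟩ := exists_pairL u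
  rw [← vertsOn_eq]
  exact hsimp _ (facetFun_isFacet hd hu)

lemma facetFun_int {P : Polytope d} (hd : 0 < d) (hrefl : P.IsReflexive)
    {u : (Fin d → ℝ) →ₗ[ℝ] ℝ} (hu : FacetFun P u) {x : Fin d → ℝ} (hx : IsLatticePt x) :
    ∃ z : ℤ, u x = z := by
  obtain ⟨u, rfl⟩ := exists_pairL u
  obtain ⟨a, ha⟩ := hrefl.2.2 _ (facetFun_isFacet hd hu)
  have : pairL u = pairL (fun i => (a i : ℝ)) := by
    refine LinearMap.ext_on hu.2 fun v hv => ?_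
    rw [hv.2]
    exact (ha v ⟨vert_mem hv.1, hv.2⟩).symm
  rw [this]
  choose z hz using hx
  exact ⟨∑ i, a i * z i, by simp [pairing, hz]⟩

/-! ### Neighbouring facets -/

/-- Crossing the ridge of the facet `u` opposite to its vertex `e`, where `w` is the element of
the dual basis belonging to `e`: the neighbouring facet is `u - t w` with an integer `t ≥ 1`,
and has exactly one vertex `n` outside the facet `u`. -/
lemma exists_neighbor {P : Polytope d} (hd : 0 < d) (hrefl : P.IsReflexive)
    (hsimp : P.IsSimplicial) {u w : (Fin d → ℝ) →ₗ[ℝ] ℝ} (hu : FacetFun P u)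
    {e : Fin d → ℝ} (he : e ∈ tight P u) (hwe : w e = 1)
    (hw : ∀ v ∈ tight P u, v ≠ e → w v = 0) :
    ∃ t : ℤ, 1 ≤ t ∧ FacetFun P (u - (t : ℝ) • w) ∧ ∃ n ∈ P.verts, w n < 0 ∧
      tight P (u - (t : ℝ) • w) = insert n (tight P u \ {e}) := by
  have hw0 : -w ≠ 0 := by
    intro h
    have : (-w) e = 0 := by rw [h]; rfl
    simp [hwe] at this
  obtain ⟨t, ht, hle, n, hn, hwn, hn1⟩ := exists_step hrefl.2.1 hu.1 hw0 (by
    intro v hv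
    by_cases h : v = e
    · simp [h, hwe]
    · simp [hw v hv h])
  have heq : u + t • -w = u - t • w := by rw [smul_neg, sub_eq_add_neg]
  rw [heq] at hle hn1
  have hwn' : w n < 0 := by simpa using hwn
  have hsub : insert n (tight P u \ {e}) ⊆ tight P (u - t • w) := by
    rintro v (rfl | ⟨hv, hve⟩)
    · exact ⟨hn, hn1⟩
    · exact ⟨hv.1, by simp [hw v hv hve, hv.2]⟩
  have hFF : FacetFun P (u - t • w) := by
    refine ⟨hle, ?_⟩
    rw [eq_top_iff]
    refine le_trans ?_ (Submodule.span_mono hsub)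
    rw [← hu.2, Submodule.span_le]
    have hnmem : n ∈ Submodule.span ℝ (insert e (tight P u \ {e})) := by
      rw [Set.insert_sdiff_singleton, Set.insert_eq_of_mem he, hu.2]; trivial
    obtain ⟨c, s, hs, hns⟩ := Submodule.mem_span_insert.1 hnmem
    have hws : w s = 0 := by
      have : Submodule.span ℝ (tight P u \ {e}) ≤ LinearMap.ker w :=
        Submodule.span_le.2 fun v hv => hw v hv.1 hv.2
      exact this hs
    have hc : c = w n := by rw [hns]; simp [hwe, hws]
    have hc0 : c ≠ 0 := by rw [hc]; exact hwn'.ne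
    intro v hv
    by_cases hve : v = e
    · have : v = c⁻¹ • (n - s) := by
        rw [hns, add_sub_cancel_right, smul_smul, inv_mul_cancel₀ hc0, one_smul, hve]
      rw [this]
      refine Submodule.smul_mem _ _ (Submodule.sub_mem _ (Submodule.subset_span (by simp)) ?_)
      exact Submodule.span_mono (Set.subset_insert _ _) hs
    · exact Submodule.subset_span (Set.mem_insert_of_mem _ ⟨hv, hve⟩)
  obtain ⟨z, hz⟩ := facetFun_int hd hrefl hFF (hrefl.1 e he.1)
  have htz : t = ((1 - z : ℤ) : ℝ) := by
    simp only [LinearMap.sub_apply, LinearMap.smul_apply, smul_eq_mul, he.2, hwe] at hz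
    push_cast; linarith
  rw [htz] at hFF hsub ht
  refine ⟨1 - z, by exact_mod_cast ht, hFF, n, hn, hwn', ?_⟩
  refine (Set.eq_of_subset_of_ncard_le hsub ?_ (finite_tight _ _)).symm
  have hnn : n ∉ tight P u \ {e} := fun h => by
    have := hw n h.1 h.2
    linarith
  have hfin : (tight P u \ {e}).Finite := (finite_tight P u).subset Set.sdiff_subset
  rw [ncard_tight hd hsimp hFF, Set.ncard_insert_of_notMem hnn hfin,
    Set.ncard_sdiff_singleton_of_mem he, ncard_tight hd hsimp hu]
  omega

/-- A vertex on the level `0` of the facet `u` with negative `w`-coordinate is the new vertex `n`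
of the neighbouring facet `u - t w`: the functional `u - t w` is a positive integer there. -/
lemma eq_neighbor {P : Polytope d} (hd : 0 < d) (hrefl : P.IsReflexive)
    {u w : (Fin d → ℝ) →ₗ[ℝ] ℝ} {e n : Fin d → ℝ} {t : ℤ} (ht : 1 ≤ t)
    (hF : FacetFun P (u - (t : ℝ) • w))
    (hT : tight P (u - (t : ℝ) • w) = insert n (tight P u \ {e}))
    {y : Fin d → ℝ} (hy : y ∈ P.verts) (huy : u y = 0) (hwy : w y < 0) :
    y = n ∧ t * w y = -1 := by
  obtain ⟨z, hz⟩ := facetFun_int hd hrefl hF (hrefl.1 y hy)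
  have hle := hF.1 y hy
  have ht' : (1 : ℝ) ≤ t := by exact_mod_cast ht
  have hz' := hz
  simp only [LinearMap.sub_apply, LinearMap.smul_apply, smul_eq_mul, huy] at hz'
  have hpos : (0 : ℝ) < z := by rw [← hz']; nlinarith
  have hz1 : z = 1 := by
    have h1 : 0 < z := by exact_mod_cast hpos
    have h2 : z ≤ 1 := by rw [hz] at hle; exact_mod_cast hle
    omega
  subst hz1
  push_cast at hz hz'
  have hmem : y ∈ tight P (u - (t : ℝ) • w) := ⟨hy, hz⟩
  rw [hT] at hmem
  refine ⟨?_, by linarith⟩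
  rcases hmem with h | h
  · exact h
  · have := h.1.2
    linarith

/-! ### The facet with `d` vertices on level `0` -/

/-- For a facet `F`, any functional that is `1` on `F` is the facet functional of `F`. -/
lemma facetFun_of_isFacet {P : Polytope d} (h0 : 0 ∈ interior P.carrier)
    {F : Set (Fin d → ℝ)} (hF : P.IsFacet F) {uF : Fin d → ℝ} (huF : P.IsUF F uF) :
    0 < d ∧ FacetFun P (pairL uF) ∧ F = {x ∈ P.carrier | pairing uF x = 1} := by
  obtain ⟨⟨w, hw, c, hle, hFe⟩, ⟨x0, hx0⟩, hdim⟩ := hF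
  have hd : 0 < d := by
    rcases Nat.eq_zero_or_pos d with rfl | h
    · exact absurd (Subsingleton.elim _ _) hw
    · exact h
  have hwL : pairL w ≠ 0 := by
    intro h
    apply hw
    ext i
    have := LinearMap.congr_fun h (Pi.single i 1)
    simpa [pairing, Pi.single_apply] using this
  have hc : 0 < c := by
    obtain ⟨v, hv, hpos⟩ := exists_pos_vert h0 hwL
    exact hpos.trans_le (hle v (vert_mem hv))
  let u : (Fin d → ℝ) →ₗ[ℝ] ℝ := c⁻¹ • pairL w
  have hu1 : ∀ x, u x = 1 ↔ pairing w x = c := fun x => by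
    simp only [u, LinearMap.smul_apply, pairL_apply, smul_eq_mul]
    rw [inv_mul_eq_iff_eq_mul₀ hc.ne', mul_one]
  have hule : ∀ v ∈ P.verts, u v ≤ 1 := fun v hv => by
    simp only [u, LinearMap.smul_apply, pairL_apply, smul_eq_mul]
    rw [inv_mul_le_iff₀ hc, mul_one]
    exact hle v (vert_mem hv)
  have hFu : F = {x ∈ P.carrier | u x = 1} := by
    rw [hFe]; ext x; simp [hu1]
  have hspanF : F ⊆ Submodule.span ℝ (tight P u) := by
    rw [hFu]
    exact fun x hx => mem_span_tight hule hx.1 hx.2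
  have hspan : Submodule.span ℝ (tight P u) = ⊤ := by
    apply Submodule.eq_top_of_finrank_eq
    apply le_antisymm (Submodule.finrank_le _)
    have hlt : vectorSpan ℝ F < Submodule.span ℝ (tight P u) := by
      refine lt_of_le_of_ne ?_ fun h => ?_
      · rw [vectorSpan_def, Submodule.span_le]
        rintro _ ⟨a, ha, b, hb, rfl⟩
        exact Submodule.sub_mem _ (hspanF ha) (hspanF hb)
      · have hk : vectorSpan ℝ F ≤ LinearMap.ker u := by
          rw [vectorSpan_def, Submodule.span_le]
          rintro _ ⟨a, ha, b, hb, rfl⟩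
          rw [hFu] at ha hb
          simp only [SetLike.mem_coe, LinearMap.mem_ker, vsub_eq_sub, map_sub, ha.2, hb.2,
            sub_self]
        have h1 : u x0 = 0 := hk (h ▸ hspanF hx0)
        rw [hFu] at hx0
        have := hx0.2
        linarith
    have := Submodule.finrank_lt_finrank_of_lt hlt
    simp only [Module.finrank_fintype_fun_eq_card, Fintype.card_fin]
    omega
  have hEq : pairL uF = u := by
    refine LinearMap.ext_on hspan fun v hv => ?_
    rw [hv.2]
    refine huF v ?_
    rw [hFu]
    exact ⟨vert_mem hv.1, hv.2⟩
  refine ⟨hd, hEq ▸ ⟨hule, hspan⟩, ?_⟩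
  rw [hFu, ← hEq]
  rfl

/-- The vertices of a facet of a simplicial polytope form a basis. -/
lemma exists_basis {P : Polytope d} (hd : 0 < d) (hsimp : P.IsSimplicial)
    {u : (Fin d → ℝ) →ₗ[ℝ] ℝ} (hu : FacetFun P u) :
    ∃ b : Module.Basis (Fin d) ℝ (Fin d → ℝ), Set.range b = tight P u := by
  have hc := ncard_tight hd hsimp hu
  have : Fintype (tight P u) := (finite_tight P u).fintype
  rw [Set.ncard_eq_toFinset_card', Set.toFinset_card] at hc
  let e : Fin d ≃ tight P u := (Fintype.equivFinOfCardEq hc).symm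
  have hr : Set.range (fun i => (e i : Fin d → ℝ)) = tight P u := by
    ext v
    exact ⟨fun ⟨i, hi⟩ => hi ▸ (e i).2, fun h => ⟨e.symm ⟨v, h⟩, by simp⟩⟩
  have hs : ⊤ ≤ Submodule.span ℝ (Set.range (fun i => (e i : Fin d → ℝ))) := by
    rw [hr, hu.2]
  refine ⟨basisOfTopLeSpanOfCardEqFinrank _ hs (by simp), ?_⟩
  rw [coe_basisOfTopLeSpanOfCardEqFinrank, hr]

/-- Bundles what is proved about the neighbours of `F`: with `b` the basis of vertices of `F`,
each neighbouring facet has functional `u - b.coord i` and its new vertex is `b (σ i) - b i`. -/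
lemma exists_sigma {P : Polytope d} (hd : 0 < d) (hrefl : P.IsReflexive)
    (hsimp : P.IsSimplicial) (hterm : P.IsTerminal) {u : (Fin d → ℝ) →ₗ[ℝ] ℝ}
    (hu : FacetFun P u) (b : Module.Basis (Fin d) ℝ (Fin d → ℝ))
    (hb : Set.range b = tight P u)
    (hZ : {x | x ∈ P.verts ∧ u x = 0}.ncard = d) :
    ∃ σ : Fin d → Fin d, ∀ i, σ i ≠ i ∧ b (σ i) - b i ∈ P.verts ∧
      FacetFun P (u - b.coord i) ∧
      tight P (u - b.coord i) = insert (b (σ i) - b i) (tight P u \ {b i}) := by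
  have hbt : ∀ i, b i ∈ tight P u := fun i => hb ▸ Set.mem_range_self i
  have hsum : ∀ (g : (Fin d → ℝ) →ₗ[ℝ] ℝ) y, g y = ∑ i, b.coord i y * g (b i) := fun g y => by
    conv_lhs => rw [← b.sum_repr y, map_sum]
    simp only [map_smul, smul_eq_mul, Module.Basis.coord_apply]
  have husum : ∀ y, u y = ∑ i, b.coord i y := fun y => by
    rw [hsum u y]
    exact Finset.sum_congr rfl fun i _ => by rw [(hbt i).2, mul_one]
  have hnb : ∀ i, _ := fun i => exists_neighbor hd hrefl hsimp hu (w := b.coord i) (hbt i)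
    (by simp) (by
      rw [← hb]
      rintro _ ⟨j, rfl⟩ hj
      have : j ≠ i := fun h => hj (h ▸ rfl)
      simp [this])
  choose t ht hFF n hn hwn hT using hnb
  have hneg : ∀ z ∈ P.verts, u z = 0 → ∃ i, b.coord i z < 0 := by
    intro z hz huz
    by_contra! h
    rw [husum, Finset.sum_eq_zero_iff_of_nonneg (fun i _ => h i)] at huz
    have : z = 0 := b.ext_elem fun i => by simpa using huz i (Finset.mem_univ i)
    exact zero_notMem_verts hrefl.2.1 hd (this ▸ hz)
  -- Level `0` consists of neighbouring vertices; as it has `d` elements, every `n i` lies there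
  -- and the `n i` are distinct.
  have hsub : {x | x ∈ P.verts ∧ u x = 0} ⊆ Set.range n := by
    rintro z ⟨hz, huz⟩
    obtain ⟨i, hi⟩ := hneg z hz huz
    exact ⟨i, (eq_neighbor hd hrefl (ht i) (hFF i) (hT i) hz huz hi).1.symm⟩
  have hcard : (Set.range n).ncard ≤ d := by
    rw [← Set.image_univ]
    simpa using Set.ncard_image_le (f := n) (Set.finite_univ (α := Fin d))
  have hZr := Set.eq_of_subset_of_ncard_le hsub (hcard.trans_eq hZ.symm) (Set.finite_range n)
  have hinj : Function.Injective n := by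
    rw [hZr, ← Set.image_univ] at hZ
    have := Set.injOn_of_ncard_image_eq (f := n) (s := Set.univ) (by simpa using hZ)
    exact Set.injOn_univ.1 this
  have hun : ∀ i, u (n i) = 0 := fun i => by
    have h : n i ∈ {x | x ∈ P.verts ∧ u x = 0} := hZr.symm ▸ Set.mem_range_self i
    exact h.2
  have hcoord : ∀ i j, j ≠ i → 0 ≤ b.coord j (n i) := by
    intro i j hji
    by_contra! h
    exact hji (hinj (eq_neighbor hd hrefl (ht j) (hFF j) (hT j) (hn i) (hun i) h).1).symm
  have hmain : ∀ i, ∃ j, n i + b i = b j := by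
    intro i
    have hlat : IsLatticePt (n i + b i) := by
      intro k
      obtain ⟨p, hp⟩ := hrefl.1 _ (hn i) k
      obtain ⟨q, hq⟩ := hrefl.1 _ (hbt i).1 k
      exact ⟨p + q, by simp [hp, hq]⟩
    have hmem : n i + b i ∈ P.carrier := by
      refine mem_carrier_of_facets hrefl.2.1 _ fun g hg => ?_
      obtain ⟨p, hp⟩ := facetFun_int hd hrefl hg (hrefl.1 _ (hn i))
      obtain ⟨q, hq⟩ := facetFun_int hd hrefl hg (hrefl.1 _ (hbt i).1)
      have hp1 : p ≤ 1 := by exact_mod_cast hp ▸ hg.1 _ (hn i)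
      have hq1 : q ≤ 1 := by exact_mod_cast hq ▸ hg.1 _ (hbt i).1
      rw [map_add, hp, hq]
      by_contra! hgt
      have hgt' : 1 < p + q := by exact_mod_cast hgt
      -- Otherwise `n i` and `b i` lie on a common facet, which the signs of the coordinates
      -- of `n i` exclude.
      have hq2 : q = 1 := by omega
      have hp2 : p = 1 := by omega
      have hle : g (n i) ≤ u (n i) := by
        rw [hsum g, husum]
        refine Finset.sum_le_sum fun j _ => ?_
        by_cases hji : j = i
        · rw [hji, hq, hq2]; simp
        · have h1 := hcoord i j hji
          have h2 := hg.1 _ (hbt j).1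
          nlinarith
      rw [hp, hun, hp2] at hle
      norm_num at hle
    have hu1 : u (n i + b i) = 1 := by rw [map_add, hun, (hbt i).2, zero_add]
    rcases hterm _ hmem hlat with h | h
    · rw [h] at hu1; simp at hu1
    · obtain ⟨j, hj⟩ : n i + b i ∈ Set.range b := hb ▸ ⟨h, hu1⟩
      exact ⟨j, hj.symm⟩
  choose σ hσ using hmain
  have hnσ : ∀ i, n i = b (σ i) - b i := fun i => by rw [← hσ i, add_sub_cancel_right]
  refine ⟨σ, fun i => ?_⟩
  have hne : σ i ≠ i := by
    intro h
    have := hwn i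
    rw [hnσ, h] at this
    simp at this
  have hti : ((t i : ℤ) : ℝ) = 1 := by
    have := (eq_neighbor hd hrefl (ht i) (hFF i) (hT i) (hn i) (hun i) (hwn i)).2
    rw [hnσ, map_sub] at this
    simp [hne] at this
    exact_mod_cast this
  refine ⟨hne, hnσ i ▸ hn i, ?_, ?_⟩
  · have := hFF i
    rwa [hti, one_smul] at this
  · have := hT i
    rwa [hti, one_smul, hnσ i] at this

end FacetNeg

/-! ### Lattice points on level `-1` -/

open FacetNeg in
/-- Lemma (`smalllemma2`): if a facet `F` of a terminal simplicial reflexive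
`d`-polytope has exactly `d` vertices of `P` in `H(F, 0)`, and `x` is a lattice point
of `P` with `⟨u_F, x⟩ = -1`, then `-x` is a vertex of `F`. -/
theorem neg_mem_facet_of_on_Hm1 {d : ℕ} (P : Polytope d)
    (hrefl : P.IsReflexive) (hsimp : P.IsSimplicial) (hterm : P.IsTerminal)
    (F : Set (Fin d → ℝ)) (hF : P.IsFacet F)
    (uF : Fin d → ℝ) (huF : P.IsUF F uF)
    (hd : {x | x ∈ P.verts ∧ pairing uF x = 0}.ncard = d)
    (x : Fin d → ℝ) (hx : x ∈ P.carrier) (hxlat : IsLatticePt x)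
    (hxm1 : pairing uF x = -1) :
    -x ∈ P.vertsOn F := by
  obtain ⟨hd0, hu, hFe⟩ := facetFun_of_isFacet hrefl.2.1 hF huF
  rw [hFe, vertsOn_eq]
  set u := pairL uF with hudef
  have hux : u x = -1 := hxm1
  obtain ⟨b, hb⟩ := exists_basis hd0 hsimp hu
  have hbt : ∀ i, b i ∈ tight P u := fun i => hb ▸ Set.mem_range_self i
  obtain ⟨σ, hσ⟩ := exists_sigma hd0 hrefl hsimp hterm hu b hb hd
  have hcb : ∀ i j, b.coord i (b j) = if j = i then 1 else 0 := fun i j => by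
    simp [Finsupp.single_apply]
  have hxv : x ∈ P.verts := by
    rcases hterm x hx hxlat with h | h
    · rw [h] at hux; simp at hux
    · exact h
  have husum : ∀ y, u y = ∑ i, b.coord i y := fun y => by
    conv_lhs => rw [← b.sum_repr y, map_sum]
    simp only [map_smul, smul_eq_mul, Module.Basis.coord_apply, (hbt _).2, mul_one]
  -- A negative coordinate of `x` is `-1`: the value `-2` would make `x` the vertex
  -- `b (σ i) - b i`, which is on level `0`.
  have hcoord : ∀ i, b.coord i x < 0 → b.coord i x = -1 := by
    intro i hi
    obtain ⟨-, -, hFF, hT⟩ := hσ i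
    obtain ⟨z, hz⟩ := facetFun_int hd0 hrefl hFF hxlat
    have hle := hFF.1 x hxv
    have hz' := hz
    rw [LinearMap.sub_apply, hux] at hz'
    have hzle : z ≤ 1 := by rw [hz] at hle; exact_mod_cast hle
    have hzge : -1 < z := by
      have : (-1 : ℝ) < z := by linarith
      exact_mod_cast this
    have hz1 : z ≠ 1 := by
      rintro rfl
      have hm : x ∈ tight P (u - b.coord i) := ⟨hxv, by simpa using hz⟩
      rw [hT] at hm
      rcases hm with h | h
      · rw [h, map_sub, (hbt _).2, (hbt _).2] at hux
        norm_num at hux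
      · have := h.1.2
        linarith
    have hz0 : z = 0 := by omega
    rw [hz0] at hz'
    push_cast at hz'
    linarith
  -- If `σ k = i`, the coordinate of `x` at `b i` with respect to the `k`-th neighbouring facet
  -- is `-2`, although `x` is on level `0` of that facet.
  have hσne : ∀ i k, i ≠ k → b.coord i x < 0 → b.coord k x < 0 → σ k ≠ i := by
    intro i k hik hi hk hσk
    obtain ⟨-, -, hFF, hT⟩ := hσ k
    have hbi : b i ∈ tight P (u - b.coord k) := by
      rw [hT]
      exact Or.inr ⟨hbt i, fun h => hik (b.injective h)⟩
    obtain ⟨t, ht, hF', n, -, -, hT'⟩ := exists_neighbor hd0 hrefl hsimp hFF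
      (w := b.coord i + b.coord k) hbi
      (by simp only [LinearMap.add_apply, hcb]; simp [hik]) (by
        intro v hv hvi
        rw [hT, ← hb] at hv
        rcases hv with rfl | ⟨⟨j, rfl⟩, hj⟩
        · simp only [LinearMap.add_apply, map_sub, hcb, hσk]
          simp [hik, hik.symm]
        · have h1 : j ≠ k := fun h => hj (h ▸ rfl)
          have h2 : j ≠ i := fun h => hvi (h ▸ rfl)
          simp only [LinearMap.add_apply, hcb]
          simp [h1, h2])
    have h1 := (eq_neighbor hd0 hrefl ht hF' hT' hxv
      (by rw [LinearMap.sub_apply, hux, hcoord k hk]; norm_num)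
      (by rw [LinearMap.add_apply]; linarith)).2
    rw [LinearMap.add_apply, hcoord i hi, hcoord k hk] at h1
    have ht' : (1 : ℝ) ≤ t := by exact_mod_cast ht
    linarith
  -- Two negative coordinates `i ≠ k` would make both `x` and `b (σ k) - b k` the vertex
  -- neighbouring the `i`-th neighbouring facet across `b k`.
  have huniq : ∀ i k, b.coord i x < 0 → b.coord k x < 0 → i = k := by
    intro i k hi hk
    by_contra hik
    have hki : σ k ≠ i := hσne i k hik hi hk
    have hik' : σ i ≠ k := hσne k i (Ne.symm hik) hk hi
    obtain ⟨-, -, hFF, hT⟩ := hσ i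
    have hbk : b k ∈ tight P (u - b.coord i) := by
      rw [hT]
      exact Or.inr ⟨hbt k, fun h => hik (b.injective h).symm⟩
    obtain ⟨t, ht, hF', n, -, -, hT'⟩ := exists_neighbor hd0 hrefl hsimp hFF
      (w := b.coord k) hbk
      (by simp only [hcb]; simp) (by
        intro v hv hvk
        rw [hT, ← hb] at hv
        rcases hv with rfl | ⟨⟨j, rfl⟩, hj⟩
        · simp only [map_sub, hcb]
          simp [hik, hik']
        · have h2 : j ≠ k := fun h => hvk (h ▸ rfl)
          simp only [hcb]
          simp [h2])
    have h1 := (eq_neighbor hd0 hrefl ht hF' hT' hxv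
      (by rw [LinearMap.sub_apply, hux, hcoord i hi]; norm_num) hk).1
    have h2 := (eq_neighbor hd0 hrefl ht hF' hT' (hσ k).2.1
      (by
        simp only [LinearMap.sub_apply, map_sub, hcb, (hbt _).2]
        simp [hki, Ne.symm hik])
      (by
        simp only [map_sub, hcb]
        simp [(hσ k).1])).1
    rw [h1, ← h2, map_sub, (hbt _).2, (hbt _).2] at hux
    norm_num at hux
  obtain ⟨i, hi⟩ : ∃ i, b.coord i x < 0 := by
    by_contra! h
    have := Finset.sum_nonneg fun i (_ : i ∈ Finset.univ) => h i
    rw [← husum, hux] at this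
    norm_num at this
  have hnn : ∀ j ∈ Finset.univ.erase i, 0 ≤ b.coord j x := by
    intro j hj
    by_contra! h
    exact Finset.ne_of_mem_erase hj (huniq j i h hi)
  have hs := husum x
  rw [← Finset.add_sum_erase _ _ (Finset.mem_univ i), hux, hcoord i hi] at hs
  have hs0 : ∑ j ∈ Finset.univ.erase i, b.coord j x = 0 := by linarith
  rw [Finset.sum_eq_zero_iff_of_nonneg hnn] at hs0
  have hfin : -x = b i := by
    refine b.ext_elem fun j => ?_
    have e1 : b.repr (-x) j = -b.coord j x := by simp
    have e2 : b.repr (b i) j = b.coord j (b i) := rfl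
    rw [e1, e2, hcb]
    by_cases hji : j = i
    · subst hji
      simp only [hcoord j hi]; simp
    · rw [hs0 j (by simp [hji])]
      simp [Ne.symm hji]
  rw [hfin]
  exact hbt i
end

section
/- Let P be a simplicial reflexive d-polytope with exactly 3d-1 vertices and F a special facet of P. Then the number of vertices x of P with ⟨u_F, x⟩ = 0 is either d-1 or d, and exactly one of the following three distributions holds: (1) exactly d vertices with ⟨u_F,·⟩ = 0, d-1 vertices with ⟨u_F,·⟩ = -1, and none with ⟨u_F,·⟩ ≤ -2; (2) exactly d vertices with ⟨u_F,·⟩ = 0, d-2 with ⟨u_F,·⟩ = -1, one with ⟨u_F,·⟩ = -2, and none with ⟨u_F,·⟩ ≤ -3; (3) exactly d-1 vertices with ⟨u_F,·⟩ = 0, d with ⟨u_F,·⟩ = -1, and none with ⟨u_F,·⟩ ≤ -2. -/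
/-! Write `f` for the functional `⟨u_F, ·⟩`.  On vertices `f` takes integer values at most `1`, and
exactly the `d` vertices of `F` have value `1`.

At most `d` vertices have `f = 0`
(`Polytope.card_level_zero_le`).  Such a vertex `x` is nonzero, and its coordinates in the basis
`V(F)` sum to `f x = 0`, so one coordinate `⟨u_F^w, x⟩` is negative.  The vertex `w` determines `x`:
rotating the hyperplane of `F` about the ridge opposite to `w`, i.e. moving along `u_F - t u_F^w`,
reaches a neighboring facet `F'` at some `t > 0` (`Polytope.exists_neighbor`).  Its functional
is integral, so at `x` it has the positive integer value `-t ⟨u_F^w, x⟩ ≤ 1`, so `x ∈ F'`.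
Simpliciality leaves room for only one vertex of `F'` off the ridge
(`Polytope.level_zero_unique`).

Since `F` is special, the sum of `f` over all vertices is `⟨u_F, ν_P⟩ ≥ 0`.  Hence the `2d - 1`
vertices off `F` consist of at most `d` on level `0`, and of vertices on negative levels for which
`∑ (-f) ≤ d`.  An integer count leaves only the three distributions (`level_count`). -/

open Finset

/-- Distribution of Case 1: `d` vertices on `H(F,0)`, `d-1` on `H(F,-1)`, none below. -/
def CaseOne {d : ℕ} (P : Polytope d) (uF : Fin d → ℝ) : Prop :=
  ({x | x ∈ P.verts ∧ pairing uF x = 0}.ncard : ℤ) = (d : ℤ) ∧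
  ({x | x ∈ P.verts ∧ pairing uF x = -1}.ncard : ℤ) = (d : ℤ) - 1 ∧
  ∀ x ∈ P.verts, -2 < pairing uF x

/-- Distribution of Case 2: `d` vertices on `H(F,0)`, `d-2` on `H(F,-1)`, one on
`H(F,-2)`, none below. -/
def CaseTwo {d : ℕ} (P : Polytope d) (uF : Fin d → ℝ) : Prop :=
  ({x | x ∈ P.verts ∧ pairing uF x = 0}.ncard : ℤ) = (d : ℤ) ∧
  ({x | x ∈ P.verts ∧ pairing uF x = -1}.ncard : ℤ) = (d : ℤ) - 2 ∧
  ({x | x ∈ P.verts ∧ pairing uF x = -2}.ncard : ℤ) = 1 ∧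
  ∀ x ∈ P.verts, -3 < pairing uF x

/-- Distribution of Case 3: `d-1` vertices on `H(F,0)`, `d` on `H(F,-1)`, none below. -/
def CaseThree {d : ℕ} (P : Polytope d) (uF : Fin d → ℝ) : Prop :=
  ({x | x ∈ P.verts ∧ pairing uF x = 0}.ncard : ℤ) = (d : ℤ) - 1 ∧
  ({x | x ∈ P.verts ∧ pairing uF x = -1}.ncard : ℤ) = (d : ℤ) ∧
  ∀ x ∈ P.verts, -2 < pairing uF x

/-! ### Pairings as linear functionals -/

/-- The functional `⟨u, ·⟩` as a linear map. -/
noncomputable def pairingLin {d : ℕ} (u : Fin d → ℝ) : (Fin d → ℝ) →ₗ[ℝ] ℝ where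
  toFun := pairing u
  map_add' x y := by simp [pairing, mul_add, Finset.sum_add_distrib]
  map_smul' c x := by
    simp only [pairing, Finset.mul_sum, Pi.smul_apply, smul_eq_mul, RingHom.id_apply]
    exact Finset.sum_congr rfl fun i _ => by ring

lemma pairingLin_apply {d : ℕ} (u x : Fin d → ℝ) : pairingLin u x = pairing u x := rfl

lemma pairingLin_single {d : ℕ} (u : Fin d → ℝ) (i : Fin d) :
    pairingLin u (Pi.single i 1) = u i := by
  simp [pairingLin_apply, pairing, Pi.single_apply]

lemma pairingLin_zero {d : ℕ} : pairingLin (0 : Fin d → ℝ) = 0 := by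
  refine LinearMap.ext fun x => ?_
  simp [pairingLin_apply, pairing]

lemma exists_pairing {d : ℕ} (f : (Fin d → ℝ) →ₗ[ℝ] ℝ) : ∃ u, pairingLin u = f := by
  refine ⟨fun i => f (Pi.single i 1), ?_⟩
  apply LinearMap.pi_ext'
  intro i
  ext
  simp [pairingLin_single]

lemma pairingLin_injective {d : ℕ} {u v : Fin d → ℝ} (h : pairingLin u = pairingLin v) :
    u = v := by
  ext i
  have := LinearMap.congr_fun h (Pi.single i 1)
  simpa [pairingLin_single] using this

lemma exists_int_pairing {d : ℕ} (u : Fin d → ℤ) {x : Fin d → ℝ} (hx : IsLatticePt x) :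
    ∃ n : ℤ, pairing (fun i => (u i : ℝ)) x = n := by
  choose z hz using hx
  exact ⟨∑ i, u i * z i, by simp [pairing, hz]⟩

namespace Polytope

variable {d : ℕ} {P : Polytope d} {F : Set (Fin d → ℝ)}

/-! ### Functionals on a polytope with the origin in its interior -/

lemma verts_subset_carrier {v : Fin d → ℝ} (hv : v ∈ P.verts) : v ∈ P.carrier :=
  subset_convexHull ℝ _ hv

lemma carrier_le {f : (Fin d → ℝ) →ₗ[ℝ] ℝ} {c : ℝ} (h : ∀ v ∈ P.verts, f v ≤ c)
    {x : Fin d → ℝ} (hx : x ∈ P.carrier) : f x ≤ c := by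
  have : P.carrier ⊆ {x | f x ≤ c} :=
    convexHull_min (fun v hv => h v hv) (convex_halfSpace_le f.isLinear c)
  exact this hx

lemma exists_smul_mem (h0 : 0 ∈ interior P.carrier) (z : Fin d → ℝ) :
    ∃ ε : ℝ, 0 < ε ∧ ε • z ∈ P.carrier ∧ -(ε • z) ∈ P.carrier := by
  have h1 : Filter.Tendsto (fun ε : ℝ => ε • z) (nhds 0) (nhds 0) := by
    have : Continuous fun ε : ℝ => ε • z := by fun_prop
    simpa using this.tendsto 0
  have h2 : Filter.Tendsto (fun ε : ℝ => -(ε • z)) (nhds 0) (nhds 0) := by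
    simpa using h1.neg
  have hn := mem_interior_iff_mem_nhds.1 h0
  have h3 := ((h1.eventually hn).and (h2.eventually hn)).filter_mono
    (nhdsWithin_le_nhds (s := Set.Ioi 0))
  obtain ⟨ε, h, hε⟩ := (h3.and self_mem_nhdsWithin).exists
  exact ⟨ε, hε, h.1, h.2⟩

lemma exists_vertex_neg (h0 : 0 ∈ interior P.carrier) {f : (Fin d → ℝ) →ₗ[ℝ] ℝ} (hf : f ≠ 0) :
    ∃ y ∈ P.verts, f y < 0 := by
  by_contra! h
  apply hf
  refine LinearMap.ext fun z => ?_
  obtain ⟨ε, hε, h1, h2⟩ := exists_smul_mem h0 z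
  have h : ∀ v ∈ P.verts, (-f) v ≤ 0 := fun v hv => by simpa using h v hv
  have a := carrier_le h h1
  have b := carrier_le h h2
  simp only [LinearMap.neg_apply, map_neg, map_smul, smul_eq_mul] at a b
  have : ε * f z = 0 := by linarith
  simpa [hε.ne'] using this

lemma ne_zero_of_mem_verts (hd : 0 < d) (h0 : 0 ∈ interior P.carrier) {x : Fin d → ℝ}
    (hx : x ∈ P.verts) : x ≠ 0 := by
  rintro rfl
  obtain ⟨ε, hε, h1, h2⟩ := exists_smul_mem h0 (fun _ => 1)
  have := (P.vertsExtreme 0 hx).2 h1 h2 ⟨1 / 2, 1 / 2, by norm_num, by norm_num, by norm_num, by simp⟩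
  have := congrFun this ⟨0, hd⟩
  simp [hε.ne'] at this

/-! ### Facets: spanning sets, functionals and bases -/

/-- A supporting hyperplane section of `P` lies in the linear span of the vertices it
contains. -/
lemma subset_span_vertsOn (hF : P.IsFace F) : F ⊆ Submodule.span ℝ (P.vertsOn F) := by
  obtain ⟨u, -, c, hle, rfl⟩ := hF
  rintro x ⟨hx, hxc⟩
  rw [carrier, Finset.convexHull_eq] at hx
  obtain ⟨w, hw, hw1, rfl⟩ := hx
  have key : ∀ v ∈ P.verts, w v * (c - pairing u v) = 0 := by
    apply (Finset.sum_eq_zero_iff_of_nonneg fun v hv =>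
      mul_nonneg (hw v hv) (sub_nonneg.2 (hle v (verts_subset_carrier hv)))).1
    rw [Finset.centerMass_eq_of_sum_1 _ _ hw1, ← pairingLin_apply, map_sum] at hxc
    simp only [id, map_smul, smul_eq_mul, pairingLin_apply] at hxc
    simp only [mul_sub, Finset.sum_sub_distrib, ← Finset.sum_mul, hw1, hxc]
    ring
  rw [Finset.centerMass_eq_of_sum_1 _ _ hw1]
  refine Submodule.sum_mem _ fun v hv => ?_
  rcases mul_eq_zero.1 (key v hv) with h | h
  · simp [h]
  · exact Submodule.smul_mem _ _
      (Submodule.subset_span ⟨hv, verts_subset_carrier hv, (sub_eq_zero.1 h).symm⟩)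

/-- The hyperplane of a facet avoids the origin, so the facet spans the whole space. -/
lemma span_vertsOn (hrefl : P.IsReflexive) (hd : 0 < d) (hF : P.IsFacet F) :
    Submodule.span ℝ (P.vertsOn F) = ⊤ := by
  obtain ⟨u, hu⟩ := hrefl.2.2 F hF
  obtain ⟨hface, ⟨x₀, hx₀⟩, hrank⟩ := hF
  set U := pairingLin (fun i => (u i : ℝ))
  have hspan : Submodule.span ℝ F ≤ Submodule.span ℝ (P.vertsOn F) :=
    Submodule.span_le.2 (subset_span_vertsOn hface)
  have h1 : vectorSpan ℝ F ≤ Submodule.span ℝ F := by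
    rw [vectorSpan_def]
    refine Submodule.span_le.2 ?_
    rintro _ ⟨a, ha, b, hb, rfl⟩
    exact Submodule.sub_mem _ (Submodule.subset_span ha) (Submodule.subset_span hb)
  have h2 : vectorSpan ℝ F ≤ LinearMap.ker U := by
    rw [vectorSpan_def]
    refine Submodule.span_le.2 ?_
    rintro _ ⟨a, ha, b, hb, rfl⟩
    have ea : U a = 1 := hu a ha
    have eb : U b = 1 := hu b hb
    simp [ea, eb]
  have h3 : vectorSpan ℝ F < Submodule.span ℝ F := by
    refine lt_of_le_of_ne h1 fun h => ?_
    have : x₀ ∈ LinearMap.ker U := h2 (h ▸ Submodule.subset_span hx₀)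
    have e : U x₀ = 1 := hu x₀ hx₀
    simp [e] at this
  have h4 := Submodule.finrank_lt_finrank_of_lt h3
  have h5 : Submodule.span ℝ F = ⊤ := by
    apply Submodule.eq_top_of_finrank_eq
    have := Submodule.finrank_le (Submodule.span ℝ F)
    simp only [Module.finrank_fin_fun] at this ⊢
    omega
  exact top_le_iff.1 (h5 ▸ hspan)

/-- The functional equal to `1` on a facet is integral and at most `1` on the vertices of `P`, and
the vertices where it equals `1` are exactly those of the facet. -/
lemma facet_functional (hrefl : P.IsReflexive) (hd : 0 < d) (hF : P.IsFacet F)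
    {f : (Fin d → ℝ) →ₗ[ℝ] ℝ} (hf : ∀ v ∈ P.vertsOn F, f v = 1) :
    (∀ v ∈ P.verts, ∃ n : ℤ, f v = n) ∧ (∀ v ∈ P.verts, f v ≤ 1) ∧
      ∀ v ∈ P.verts, (v ∈ F ↔ f v = 1) := by
  have hspan := span_vertsOn hrefl hd hF
  have ext {g h : (Fin d → ℝ) →ₗ[ℝ] ℝ} (e : ∀ v ∈ P.vertsOn F, g v = h v) : g = h :=
    LinearMap.ext_on hspan e
  obtain ⟨u, hu⟩ := hrefl.2.2 F hF
  have hfu : f = pairingLin (fun i => (u i : ℝ)) := ext fun v hv => by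
    rw [hf v hv, pairingLin_apply, hu v hv.2]
  obtain ⟨⟨q, hq, c, hle, hFe⟩, -, -⟩ := hF
  have hqF : ∀ v ∈ P.vertsOn F, pairing q v = c := fun v hv => by
    have := hv.2
    rw [hFe] at this
    exact this.2
  have hqf : pairingLin q = c • f := ext fun v hv => by
    rw [pairingLin_apply, hqF v hv]; simp [hf v hv]
  have hc0 : c ≠ 0 := by
    rintro rfl
    apply hq
    apply pairingLin_injective
    rw [hqf, zero_smul, pairingLin_zero]
  have hc : 0 < c := by
    have := hle 0 (interior_subset hrefl.2.1)
    rw [← pairingLin_apply, map_zero] at this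
    exact lt_of_le_of_ne this hc0.symm
  have hqv (v) : pairing q v = c * f v := by
    rw [← pairingLin_apply, hqf]; rfl
  refine ⟨fun v hv => ?_, fun v hv => ?_, fun v hv => ?_⟩
  · rw [hfu]
    exact exists_int_pairing u (hrefl.1 v hv)
  · have := hle v (verts_subset_carrier hv)
    rw [hqv] at this
    nlinarith
  · constructor
    · exact fun h => hf v ⟨hv, h⟩
    · intro h
      rw [hFe]
      exact ⟨verts_subset_carrier hv, by rw [hqv, h, mul_one]⟩

lemma vertsOn_linearIndependent (hrefl : P.IsReflexive) (hsimp : P.IsSimplicial) (hd : 0 < d)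
    (hF : P.IsFacet F) : LinearIndependent ℝ ((↑) : P.vertsOn F → Fin d → ℝ) := by
  have hfin : (P.vertsOn F).Finite := P.verts.finite_toSet.subset fun v hv => hv.1
  have := hfin.fintype
  apply linearIndependent_of_top_le_span_of_card_eq_finrank
  · simp [span_vertsOn hrefl hd hF]
  · rw [Module.finrank_fin_fun, ← Nat.card_eq_fintype_card]
    exact hsimp F hF

/-- The basis `V(F)`; its coordinate functionals are the `u_F^w`. -/
noncomputable def facetBasis (hrefl : P.IsReflexive) (hsimp : P.IsSimplicial) (hd : 0 < d)
    (hF : P.IsFacet F) : Module.Basis (P.vertsOn F) ℝ (Fin d → ℝ) :=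
  Module.Basis.mk (vertsOn_linearIndependent hrefl hsimp hd hF)
    (by simp [span_vertsOn hrefl hd hF])

lemma facetBasis_apply (hrefl : P.IsReflexive) (hsimp : P.IsSimplicial) (hd : 0 < d)
    (hF : P.IsFacet F) (w : P.vertsOn F) : facetBasis hrefl hsimp hd hF w = w := by
  simp [facetBasis]

lemma facetBasis_coord_other (hrefl : P.IsReflexive) (hsimp : P.IsSimplicial) (hd : 0 < d)
    (hF : P.IsFacet F) (w v : P.vertsOn F) (h : v ≠ w) :
    (facetBasis hrefl hsimp hd hF).coord w v = 0 := by
  rw [← facetBasis_apply hrefl hsimp hd hF v, Module.Basis.coord_apply, Module.Basis.repr_self,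
    Finsupp.single_eq_of_ne h.symm]

lemma facetBasis_coord_self (hrefl : P.IsReflexive) (hsimp : P.IsSimplicial) (hd : 0 < d)
    (hF : P.IsFacet F) (w : P.vertsOn F) :
    (facetBasis hrefl hsimp hd hF).coord w w = 1 := by
  conv_lhs => rw [← facetBasis_apply hrefl hsimp hd hF w]
  rw [Module.Basis.coord_apply, Module.Basis.repr_self, Finsupp.single_eq_same]

/-! ### Neighboring facets and the vertices on level zero -/

/-- A functional that is at most `1` on `P` and equal to `1` on a spanning set of vertices
cuts out a facet. -/
lemma isFacet_of_span (hd : 0 < d) {g : (Fin d → ℝ) →ₗ[ℝ] ℝ}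
    (hle : ∀ v ∈ P.verts, g v ≤ 1) {S : Set (Fin d → ℝ)} (hS : ∀ v ∈ S, v ∈ P.verts ∧ g v = 1)
    (hspan : Submodule.span ℝ S = ⊤) : P.IsFacet {x ∈ P.carrier | g x = 1} := by
  set G := {x ∈ P.carrier | g x = 1}
  have hSG : S ⊆ G := fun v hv => ⟨verts_subset_carrier (hS v hv).1, (hS v hv).2⟩
  have hne : S.Nonempty := by
    rw [Set.nonempty_iff_ne_empty]
    rintro rfl
    have := finrank_top ℝ (Fin d → ℝ)
    rw [← hspan, Submodule.span_empty, finrank_bot, Module.finrank_fin_fun] at this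
    omega
  obtain ⟨x₀, hx₀⟩ := hne
  have hg0 : g ≠ 0 := by
    rintro rfl
    simpa using (hS x₀ hx₀).2
  refine ⟨?_, ⟨x₀, hSG hx₀⟩, ?_⟩
  · obtain ⟨u, hu⟩ := exists_pairing g
    refine ⟨u, ?_, 1, fun x hx => ?_, ?_⟩
    · rintro rfl
      apply hg0
      rw [← hu, pairingLin_zero]
    · rw [← pairingLin_apply, hu]
      exact carrier_le hle hx
    · ext x
      simp only [← pairingLin_apply, hu, G]
  · have h2 : vectorSpan ℝ G ≤ LinearMap.ker g := by
      rw [vectorSpan_def]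
      refine Submodule.span_le.2 ?_
      rintro _ ⟨a, ha, b, hb, rfl⟩
      simp [ha.2, hb.2]
    have hsurj : Function.Surjective g := LinearMap.surjective hg0
    have h3 : LinearMap.ker g ≤ vectorSpan ℝ G := by
      -- subtracting `g x • x₀` maps the spanning set `S` into differences of points of `G`
      have h4 : ∀ x, x - g x • x₀ ∈ vectorSpan ℝ G := by
        intro x
        have hx : x ∈ Submodule.span ℝ S := hspan ▸ Submodule.mem_top
        induction hx using Submodule.span_induction with
        | mem v hv =>
          rw [(hS v hv).2, one_smul]
          exact vsub_mem_vectorSpan ℝ (hSG hv) (hSG hx₀)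
        | zero => simp
        | add a b _ _ ha hb =>
          have := Submodule.add_mem _ ha hb
          rw [map_add, add_smul]
          convert this using 1
          abel
        | smul c a _ ha =>
          have := Submodule.smul_mem _ c ha
          rw [map_smul, smul_assoc, ← smul_sub]
          exact this
      intro x hx
      have := h4 x
      rwa [LinearMap.mem_ker.1 hx, zero_smul, sub_zero] at this
    rw [le_antisymm h2 h3]
    have := LinearMap.finrank_range_add_finrank_ker g
    rw [LinearMap.range_eq_top.2 hsurj, finrank_top, Module.finrank_self,
      Module.finrank_fin_fun] at this
    omega

/-- The neighboring facet `N(F, w)` is cut out by `u_F - t u_F^w` for some `t > 0`. -/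
lemma exists_neighbor (hrefl : P.IsReflexive) (hsimp : P.IsSimplicial) (hd : 0 < d)
    (hF : P.IsFacet F) {f : (Fin d → ℝ) →ₗ[ℝ] ℝ} (hf : ∀ v ∈ P.vertsOn F, f v = 1)
    (w : P.vertsOn F) :
    ∃ t : ℝ, 0 < t ∧
      P.IsFacet {x ∈ P.carrier | (f - t • (facetBasis hrefl hsimp hd hF).coord w) x = 1} := by
  classical
  obtain ⟨-, hle, hiff⟩ := facet_functional hrefl hd hF hf
  set k := (facetBasis hrefl hsimp hd hF).coord w with hk
  have hkw : k w = 1 := facetBasis_coord_self hrefl hsimp hd hF w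
  have hko : ∀ v : P.vertsOn F, v ≠ w → k v = 0 := facetBasis_coord_other hrefl hsimp hd hF w
  have hk0 : k ≠ 0 := by
    intro h
    simp [h] at hkw
  -- `t` is the smallest ratio at which `u_F - t u_F^w` reaches `1` on a new vertex
  obtain ⟨y₀, hy₀, hy₀n⟩ := exists_vertex_neg hrefl.2.1 hk0
  obtain ⟨y, hy, hmin⟩ := (P.verts.filter fun y => k y < 0).exists_min_image
    (fun y => (1 - f y) / (-k y)) ⟨y₀, Finset.mem_filter.2 ⟨hy₀, hy₀n⟩⟩
  obtain ⟨hyv, hyn⟩ := Finset.mem_filter.1 hy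
  have hyF : f y < 1 := by
    refine lt_of_le_of_ne (hle y hyv) fun h => ?_
    have hyF := (hiff y hyv).2 h
    by_cases e : (⟨y, hyv, hyF⟩ : P.vertsOn F) = w
    · rw [← e] at hkw
      simp only at hkw
      linarith
    · have := hko _ e
      simp only at this
      linarith
  set t := (1 - f y) / (-k y) with ht
  have ht0 : 0 < t := div_pos (by linarith) (by linarith)
  have hty : t * -k y = 1 - f y := div_mul_cancel₀ _ (by linarith)
  refine ⟨t, ht0, ?_⟩
  refine isFacet_of_span hd (S := insert y {v | v ∈ P.vertsOn F ∧ v ≠ w}) ?_ ?_ ?_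
  · intro v hv
    simp only [LinearMap.sub_apply, LinearMap.smul_apply, smul_eq_mul]
    rcases lt_or_ge (k v) 0 with h | h
    · have := hmin v (Finset.mem_filter.2 ⟨hv, h⟩)
      rw [le_div_iff₀ (by linarith)] at this
      linarith
    · have := hle v hv
      nlinarith
  · rintro v (rfl | ⟨hv, hvw⟩)
    · refine ⟨hyv, ?_⟩
      simp only [LinearMap.sub_apply, LinearMap.smul_apply, smul_eq_mul]
      linarith
    · refine ⟨hv.1, ?_⟩
      have := hko ⟨v, hv⟩ (fun h => hvw (congrArg Subtype.val h))
      simp only at this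
      simp [this, hf v hv]
  · -- `w` lies in the span because `y` has a nonzero `w`-coordinate
    set T := Submodule.span ℝ (insert y {v | v ∈ P.vertsOn F ∧ v ≠ w})
    have hother : ∀ v : P.vertsOn F, v ≠ w → (v : Fin d → ℝ) ∈ T := fun v hv =>
      Submodule.subset_span (Or.inr ⟨v.2, fun h => hv (Subtype.ext h)⟩)
    have hyT : y ∈ T := Submodule.subset_span (Or.inl rfl)
    have hfin : (P.vertsOn F).Finite := P.verts.finite_toSet.subset fun v hv => hv.1
    have := hfin.fintype
    have hsum := (facetBasis hrefl hsimp hd hF).sum_repr y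
    rw [← Finset.add_sum_erase _ _ (Finset.mem_univ w)] at hsum
    simp only [facetBasis_apply] at hsum
    have hrest : ∑ v ∈ Finset.univ.erase w,
        (facetBasis hrefl hsimp hd hF).repr y v • (v : Fin d → ℝ) ∈ T :=
      Submodule.sum_mem _ fun v hv => Submodule.smul_mem _ _ (hother v (Finset.ne_of_mem_erase hv))
    have hkwT : k y • (w : Fin d → ℝ) ∈ T := by
      have : k y • (w : Fin d → ℝ) = y - ∑ v ∈ Finset.univ.erase w,
        (facetBasis hrefl hsimp hd hF).repr y v • (v : Fin d → ℝ) := eq_sub_of_add_eq hsum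
      rw [this]
      exact Submodule.sub_mem _ hyT hrest
    have hwT : (w : Fin d → ℝ) ∈ T := (Submodule.smul_mem_iff _ hyn.ne).1 hkwT
    rw [← top_le_iff, ← span_vertsOn hrefl hd hF]
    refine Submodule.span_le.2 fun v hv => ?_
    by_cases e : v = w
    · rw [e]; exact hwT
    · exact hother ⟨v, hv⟩ fun h => e (congrArg Subtype.val h)

/-- For a vertex `w` of `F`, at most one vertex `x` has `⟨u_F, x⟩ = 0` and `⟨u_F^w, x⟩ < 0`:
integrality puts every such `x` on the neighboring facet `N(F, w)`, which has only one vertex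
outside `F`. -/
lemma level_zero_unique (hrefl : P.IsReflexive) (hsimp : P.IsSimplicial) (hd : 0 < d)
    (hF : P.IsFacet F) {f : (Fin d → ℝ) →ₗ[ℝ] ℝ} (hf : ∀ v ∈ P.vertsOn F, f v = 1)
    (w : P.vertsOn F) {x y : Fin d → ℝ} (hx : x ∈ P.verts) (hy : y ∈ P.verts)
    (hfx : f x = 0) (hfy : f y = 0)
    (hkx : (facetBasis hrefl hsimp hd hF).coord w x < 0)
    (hky : (facetBasis hrefl hsimp hd hF).coord w y < 0) : x = y := by
  obtain ⟨t, ht, hF'⟩ := exists_neighbor hrefl hsimp hd hF hf w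
  set k := (facetBasis hrefl hsimp hd hF).coord w with hk
  set F' := {x ∈ P.carrier | (f - t • k) x = 1} with hF'def
  obtain ⟨hint, hle, hiff⟩ := facet_functional hrefl hd hF' (f := f - t • k) fun v hv => hv.2.2
  have mem : ∀ z ∈ P.verts, f z = 0 → k z < 0 → z ∈ P.vertsOn F' := by
    intro z hz hfz hkz
    refine ⟨hz, (hiff z hz).2 ?_⟩
    obtain ⟨n, hn⟩ := hint z hz
    have h1 := hle z hz
    have h2 : 0 < (f - t • k) z := by
      simp only [LinearMap.sub_apply, LinearMap.smul_apply, smul_eq_mul]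
      nlinarith
    rw [hn] at h1 h2 ⊢
    have : n = 1 := by
      have : 0 < n := by exact_mod_cast h2
      have : n ≤ 1 := by exact_mod_cast h1
      omega
    simp [this]
  by_contra hne
  -- otherwise `F'` contains `x`, `y` and the `d - 1` vertices of `F` other than `w`
  have hfin : (P.vertsOn F).Finite := P.verts.finite_toSet.subset fun v hv => hv.1
  have hfin' : (P.vertsOn F').Finite := P.verts.finite_toSet.subset fun v hv => hv.1
  have hsub : insert x (insert y (P.vertsOn F \ {(w : Fin d → ℝ)})) ⊆ P.vertsOn F' := by
    rintro v (rfl | rfl | ⟨hv, hvw⟩)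
    · exact mem _ hx hfx hkx
    · exact mem _ hy hfy hky
    · refine ⟨hv.1, (hiff v hv.1).2 ?_⟩
      have := facetBasis_coord_other hrefl hsimp hd hF w ⟨v, hv⟩
        (fun h => hvw (congrArg Subtype.val h))
      simp only [← hk] at this
      simp [this, hf v hv]
  have hy' : y ∉ P.vertsOn F \ {(w : Fin d → ℝ)} := fun h => by
    have := hf y h.1
    linarith
  have hx' : x ∉ insert y (P.vertsOn F \ {(w : Fin d → ℝ)}) := by
    rintro (h | h)
    · exact hne h
    · have := hf x h.1
      linarith
  have hcard := Set.ncard_le_ncard hsub hfin'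
  rw [Set.ncard_insert_of_notMem hx' ((hfin.sdiff).insert y),
    Set.ncard_insert_of_notMem hy' hfin.sdiff, hsimp F' hF'] at hcard
  have := Set.ncard_sdiff_singleton_add_one w.2 hfin
  rw [hsimp F hF] at this
  omega

lemma sum_coord (hrefl : P.IsReflexive) (hsimp : P.IsSimplicial) (hd : 0 < d)
    (hF : P.IsFacet F) {f : (Fin d → ℝ) →ₗ[ℝ] ℝ} (hf : ∀ v ∈ P.vertsOn F, f v = 1)
    [Fintype (P.vertsOn F)] (x : Fin d → ℝ) :
    ∑ w, (facetBasis hrefl hsimp hd hF).coord w x = f x := by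
  conv_rhs => rw [← (facetBasis hrefl hsimp hd hF).sum_repr x, map_sum]
  refine Finset.sum_congr rfl fun w _ => ?_
  rw [map_smul, facetBasis_apply, hf w w.2, smul_eq_mul, mul_one, Module.Basis.coord_apply]

lemma card_level_zero_le (hrefl : P.IsReflexive) (hsimp : P.IsSimplicial) (hd : 0 < d)
    (hF : P.IsFacet F) {f : (Fin d → ℝ) →ₗ[ℝ] ℝ} (hf : ∀ v ∈ P.vertsOn F, f v = 1)
    {Z : Finset (Fin d → ℝ)} (hZ : ∀ x ∈ Z, x ∈ P.verts ∧ f x = 0) : #Z ≤ d := by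
  have hfin : (P.vertsOn F).Finite := P.verts.finite_toSet.subset fun v hv => hv.1
  have := hfin.fintype
  have hneg : ∀ x ∈ Z, ∃ w, (facetBasis hrefl hsimp hd hF).coord w x < 0 := by
    intro x hx
    by_contra! h
    have hs := sum_coord hrefl hsimp hd hF hf x
    rw [(hZ x hx).2, Finset.sum_eq_zero_iff_of_nonneg fun w _ => h w] at hs
    apply ne_zero_of_mem_verts hd hrefl.2.1 (hZ x hx).1
    exact (facetBasis hrefl hsimp hd hF).ext_elem fun w => by simpa using hs w (Finset.mem_univ w)
  rcases Z.eq_empty_or_nonempty with rfl | ⟨z, hz⟩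
  · simp
  obtain ⟨w₀, -⟩ := hneg z hz
  have : Nonempty (P.vertsOn F) := ⟨w₀⟩
  choose! g hg using hneg
  have hcard : #Z ≤ #(Finset.univ : Finset (P.vertsOn F)) := by
    refine Finset.card_le_card_of_injOn g (fun _ _ => Finset.mem_coe.2 (Finset.mem_univ _)) ?_
    intro x hx y hy hxy
    have h2 := hg y hy
    rw [← hxy] at h2
    exact level_zero_unique hrefl hsimp hd hF hf (g x) (hZ x hx).1 (hZ y hy).1 (hZ x hx).2
      (hZ y hy).2 (hg x hx) h2
  rwa [Finset.card_univ, ← Set.toFinset_card, ← Set.ncard_eq_toFinset_card', hsimp F hF] at hcard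

end Polytope

/-! ### Counting vertices by level -/

/-- The integer count behind the three distributions. -/
lemma level_count {α : Type*} (S : Finset α) (n : α → ℤ) (d : ℕ) (hcard : (#S : ℤ) = 3 * d - 1)
    (hle : ∀ x ∈ S, n x ≤ 1) (h1 : #{x ∈ S | n x = 1} = d) (h0 : #{x ∈ S | n x = 0} ≤ d)
    (hsum : 0 ≤ ∑ x ∈ S, n x) :
    ((#{x ∈ S | n x = 0} : ℤ) = d ∧ (#{x ∈ S | n x = -1} : ℤ) = d - 1 ∧ ∀ x ∈ S, -2 < n x) ∨
    ((#{x ∈ S | n x = 0} : ℤ) = d ∧ (#{x ∈ S | n x = -1} : ℤ) = d - 2 ∧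
      (#{x ∈ S | n x = -2} : ℤ) = 1 ∧ ∀ x ∈ S, -3 < n x) ∨
    ((#{x ∈ S | n x = 0} : ℤ) = d - 1 ∧ (#{x ∈ S | n x = -1} : ℤ) = d ∧
      ∀ x ∈ S, -2 < n x) := by
  classical
  -- the excess `-n - 1` of a vertex on a negative level
  set e : α → ℤ := fun x => if n x < 0 then -n x - 1 else 0 with he
  have e0 : ∀ x ∈ S, 0 ≤ e x := fun x _ => by simp only [he]; split_ifs <;> omega
  have c1 : (#{x ∈ S | n x = 1} : ℤ) = ∑ x ∈ S, if n x = 1 then 1 else 0 := by simp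
  have c0 : (#{x ∈ S | n x = 0} : ℤ) = ∑ x ∈ S, if n x = 0 then 1 else 0 := by simp
  have cS : (#S : ℤ) = ∑ x ∈ S, 1 := by simp
  have hE : ∑ x ∈ S, n x + ∑ x ∈ S, e x
      = 2 * #{x ∈ S | n x = 1} + #{x ∈ S | n x = 0} - #S := by
    rw [c1, c0, cS, Finset.mul_sum, ← Finset.sum_add_distrib, ← Finset.sum_add_distrib,
      ← Finset.sum_sub_distrib]
    refine Finset.sum_congr rfl fun x hx => ?_
    have := hle x hx
    simp only [he]
    split_ifs <;> omega
  have cm1 : (#{x ∈ S | n x = -1} : ℤ) = ∑ x ∈ S, if n x = -1 then 1 else 0 := by simp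
  have cm2 : (#{x ∈ S | n x = -2} : ℤ) = ∑ x ∈ S, if n x = -2 then 1 else 0 := by simp
  have hE1 : ∑ x ∈ S, e x ≤ 1 := by omega
  have hex : ∀ x ∈ S, e x ≤ 1 := fun x hx => (Finset.single_le_sum e0 hx).trans hE1
  have hm3 : ∀ x ∈ S, -3 < n x := fun x hx => by
    have := hex x hx
    simp only [he] at this
    split_ifs at this <;> omega
  have hm2 : (#{x ∈ S | n x = -2} : ℤ) = ∑ x ∈ S, e x := by
    rw [cm2]
    refine Finset.sum_congr rfl fun x hx => ?_
    have := hm3 x hx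
    simp only [he]
    split_ifs <;> omega
  have htot : (#S : ℤ) = #{x ∈ S | n x = 1} + #{x ∈ S | n x = 0} + #{x ∈ S | n x = -1}
      + #{x ∈ S | n x = -2} := by
    rw [c1, c0, cm1, cm2, cS, ← Finset.sum_add_distrib, ← Finset.sum_add_distrib,
      ← Finset.sum_add_distrib]
    refine Finset.sum_congr rfl fun x hx => ?_
    have := hle x hx
    have := hm3 x hx
    split_ifs <;> omega
  have hnone : #{x ∈ S | n x = -2} = 0 → ∀ x ∈ S, -2 < n x := fun h x hx => by
    have h' := hm3 x hx
    have : n x ≠ -2 := fun h2 => by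
      rw [Finset.card_eq_zero] at h
      have : x ∈ ({x ∈ S | n x = -2} : Finset α) := Finset.mem_filter.2 ⟨hx, h2⟩
      simp [h] at this
    omega
  by_cases hz : #{x ∈ S | n x = -2} = 0
  · have := hnone hz
    by_cases hd : #{x ∈ S | n x = 0} = d
    · exact Or.inl ⟨by omega, by omega, this⟩
    · exact Or.inr (Or.inr ⟨by omega, by omega, this⟩)
  · exact Or.inr (Or.inl ⟨by omega, by omega, by omega, hm3⟩)

/-- For a special facet `F` of a simplicial reflexive `d`-polytope with `3d - 1`
vertices, the number of vertices on `H(F, 0)` is `d - 1` or `d`, and exactly one of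
the three possible vertex distributions holds. -/
theorem special_facet_three_cases {d : ℕ} (P : Polytope d)
    (hrefl : P.IsReflexive) (hsimp : P.IsSimplicial)
    (hcard : (P.verts.card : ℤ) = 3 * d - 1)
    (F : Set (Fin d → ℝ)) (hF : P.IsSpecialFacet F)
    (uF : Fin d → ℝ) (huF : P.IsUF F uF) :
    (({x | x ∈ P.verts ∧ pairing uF x = 0}.ncard : ℤ) = (d : ℤ) - 1 ∨
     ({x | x ∈ P.verts ∧ pairing uF x = 0}.ncard : ℤ) = (d : ℤ)) ∧
    ((CaseOne P uF ∧ ¬ CaseTwo P uF ∧ ¬ CaseThree P uF) ∨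
     (¬ CaseOne P uF ∧ CaseTwo P uF ∧ ¬ CaseThree P uF) ∨
     (¬ CaseOne P uF ∧ ¬ CaseTwo P uF ∧ CaseThree P uF)) := by
  classical
  have hd : 0 < d := by omega
  have hfac := hF.1
  set f := pairingLin uF with hfdef
  have hf : ∀ v ∈ P.vertsOn F, f v = 1 := fun v hv => huF v hv.2
  obtain ⟨hint, hle, hiff⟩ := Polytope.facet_functional hrefl hd hfac hf
  choose! n hn using hint
  have hfin : (P.vertsOn F).Finite := P.verts.finite_toSet.subset fun v hv => hv.1
  have := hfin.fintype
  -- specialness gives `⟨u_F, ν_P⟩ = ∑ ⟨u_F^w, ν_P⟩ ≥ 0`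
  have hsum : 0 ≤ ∑ x ∈ P.verts, n x := by
    have : 0 ≤ f (∑ v ∈ P.verts, v) := by
      rw [← Polytope.sum_coord hrefl hsimp hd hfac hf]
      refine Finset.sum_nonneg fun w _ => ?_
      obtain ⟨u, hu⟩ := exists_pairing ((Polytope.facetBasis hrefl hsimp hd hfac).coord w)
      rw [← hu, pairingLin_apply]
      refine hF.2 w w.2 u ⟨?_, fun v hv hvw => ?_⟩
      · rw [← pairingLin_apply, hu, Polytope.facetBasis_coord_self]
      · rw [← pairingLin_apply, hu]
        exact Polytope.facetBasis_coord_other hrefl hsimp hd hfac w ⟨v, hv⟩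
          fun h => hvw (congrArg Subtype.val h)
    rw [map_sum, Finset.sum_congr rfl hn] at this
    exact_mod_cast this
  have hlevel : ∀ m : ℤ, {x | x ∈ P.verts ∧ pairing uF x = m}.ncard = #{x ∈ P.verts | n x = m} := by
    intro m
    rw [← Set.ncard_coe_finset]
    congr 1
    ext x
    simp only [Set.mem_ofPred_eq, Finset.coe_filter]
    refine and_congr_right fun hx => ?_
    have : pairing uF x = n x := hn x hx
    rw [this]
    exact Int.cast_inj
  have hfn : ∀ x ∈ P.verts, pairing uF x = n x := hn
  have h1 : #{x ∈ P.verts | n x = 1} = d := by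
    rw [← hlevel 1]
    refine Eq.trans (congrArg Set.ncard ?_) (hsimp F hfac)
    ext x
    simp only [Set.mem_ofPred_eq, Polytope.vertsOn, Int.cast_one]
    exact and_congr_right fun hx => (hiff x hx).symm
  have h0 : #{x ∈ P.verts | n x = 0} ≤ d :=
    Polytope.card_level_zero_le hrefl hsimp hd hfac hf fun x hx => by
      obtain ⟨hx, h⟩ := Finset.mem_filter.1 hx
      exact ⟨hx, by rw [hn x hx, h, Int.cast_zero]⟩
  have hn1 : ∀ x ∈ P.verts, n x ≤ 1 := fun x hx => by
    have := hle x hx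
    rw [hn x hx] at this
    exact_mod_cast this
  have l0 := hlevel 0
  have l1 := hlevel (-1)
  have l2 := hlevel (-2)
  push_cast at l0 l1 l2
  have b2 : (∀ x ∈ P.verts, -2 < n x) → ∀ x ∈ P.verts, -2 < pairing uF x := fun h x hx => by
    rw [hfn x hx]
    exact_mod_cast h x hx
  have b3 : (∀ x ∈ P.verts, -3 < n x) → ∀ x ∈ P.verts, -3 < pairing uF x := fun h x hx => by
    rw [hfn x hx]
    exact_mod_cast h x hx
  unfold CaseOne CaseTwo CaseThree
  rw [l0, l1, l2]
  rcases level_count P.verts n d hcard hn1 h1 h0 hsum with ⟨h, h', hb⟩ | ⟨h, h', h'', hb⟩ | ⟨h, h', hb⟩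
  · exact ⟨Or.inr h, Or.inl ⟨⟨h, h', b2 hb⟩, fun c => by omega, fun c => by omega⟩⟩
  · exact ⟨Or.inr h, Or.inr (Or.inl ⟨fun c => by omega, ⟨h, h', h'', b3 hb⟩, fun c => by omega⟩)⟩
  · exact ⟨Or.inl h, Or.inr (Or.inr ⟨fun c => by omega, fun c => by omega, ⟨h, h', b2 hb⟩⟩)⟩
end

section
/- Let P be a terminal simplicial reflexive d-polytope with exactly 3d-1 vertices possessing a special facet F such that exactly d-1 vertices of P satisfy ⟨u_F,·⟩ = 0 and exactly d vertices satisfy ⟨u_F,·⟩ = -1. Then P is centrally symmetric (i.e., -x is a vertex of P whenever x is) and d is odd. -/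
/-!
The heights `⟨u_F, x⟩` of the vertices are `1` (`d` times), `0` (`d - 1` times) and `-1` (`d` times), so
their sum is `0`. The coordinates of the vertex sum `ν` with respect to the special facet `F` are
nonnegative and add up to this height, hence `ν = 0` (`Polytope.sum_eq_zero_of_special`), and the
heights over *every* facet sum to `0`.

It suffices to show that all vertices have height at least `-1` over every facet
(`Polytope.neg_one_le`): then `-x` satisfies all facet inequalities for every vertex `x`, so it is a
nonzero lattice point of `P`, a vertex by terminality. Parity is then immediate: the `3d - 1` vertices
fall into pairs `{x, -x}`, so `d` is odd.

A vertex at height `0` over a facet is the neighboring vertex across each vertex of the facet at which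
it has a negative coordinate, so there are at most `d` of them. Counting (`Polytope.levels`) shows that
a facet with a vertex `z` below height `-1` has `z` at height `-2`, all others at height at least `-1`,
and exactly `d` vertices at height `0`. In that case (`Polytope.typeB`, `Polytope.level_two_form`) the
neighboring vertex across `v` is `w - v` for some vertex `w` of the facet, and `z = -p - q` with `p ≠ q`
vertices of the facet.

The contradiction comes from `Polytope.add_mem_of_eq`: if `p + q = r + s` for vertices with
`p ∉ {r, s}`, then `p` and `q` share no facet, so `p + q` is `0` or a vertex. Let `c - p`, `k - q`, `b - c`
be the neighboring vertices across `p`, `q`, `c`. The facet across `c` again has `z` at height `-2`, which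
yields the vertex `y = b - c - p`. If `b ≠ p`, then `y + c = (c - p) + (b - c)` makes `b - p` a second
neighboring vertex across `p`. If `b = p`, then `z + q = (c - p) + (-c)` makes `-p` a vertex, next
`z + k = -p + (k - q)` makes `z + k` a vertex, and the facet across `k` has both `z` and `z + k` at
height `-2`.
-/

open Finset

/-! ### Supporting functionals of facets -/

namespace Polytope

/-- The vertices of `P` on the hyperplane `f = 1`. -/
noncomputable def tight {d : ℕ} (P : Polytope d) (f : (Fin d → ℝ) →ₗ[ℝ] ℝ) :
    Finset (Fin d → ℝ) := by
  classical exact P.verts.filter (fun x => f x = 1)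

/-- `f` is the supporting functional of a facet: it is at most `1` on `P`, and the vertices where it
equals `1` span the ambient space. The facet itself is `{x ∈ P | f x = 1}`; functionals are used in
place of facets throughout. -/
structure IsFct {d : ℕ} (P : Polytope d) (f : (Fin d → ℝ) →ₗ[ℝ] ℝ) : Prop where
  le : ∀ x ∈ P.verts, f x ≤ 1
  span : Submodule.span ℝ (P.tight f : Set (Fin d → ℝ)) = ⊤

/-- `P` is a terminal simplicial reflexive polytope of positive dimension. -/
structure Good {d : ℕ} (P : Polytope d) : Prop where
  refl : P.IsReflexive
  simp : P.IsSimplicial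
  term : P.IsTerminal
  pos : 1 ≤ d

/-- `a v`, for `v ∈ T`, are the coordinate functionals of the basis `T`. The values `a v` for `v ∉ T`
are irrelevant. -/
structure DualTo {d : ℕ} (T : Finset (Fin d → ℝ))
    (a : (Fin d → ℝ) → (Fin d → ℝ) →ₗ[ℝ] ℝ) : Prop where
  self : ∀ v ∈ T, a v v = 1
  other : ∀ v ∈ T, ∀ w ∈ T, w ≠ v → a v w = 0
  expand : ∀ x, x = ∑ v ∈ T, a v x • v

variable {d : ℕ} {P : Polytope d}

lemma mem_tight {f : (Fin d → ℝ) →ₗ[ℝ] ℝ} {x : Fin d → ℝ} :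
    x ∈ P.tight f ↔ x ∈ P.verts ∧ f x = 1 := by
  simp [tight]

lemma exists_pairing (f : (Fin d → ℝ) →ₗ[ℝ] ℝ) : ∃ u, ∀ x, pairing u x = f x := by
  refine ⟨fun i => f (Pi.single i 1), fun x => ?_⟩
  conv_rhs => rw [LinearMap.pi_apply_eq_sum_univ f x]
  simp only [pairing, smul_eq_mul]
  refine Finset.sum_congr rfl fun i _ => ?_
  rw [mul_comm]; congr 2; ext j; simp [Pi.single_apply, eq_comm]

/-- The functional `pairing u` as a linear map. -/
noncomputable def pairL (u : Fin d → ℝ) : (Fin d → ℝ) →ₗ[ℝ] ℝ where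
  toFun := pairing u
  map_add' x y := by simp [pairing, mul_add, Finset.sum_add_distrib]
  map_smul' c x := by
    simp only [pairing, Pi.smul_apply, smul_eq_mul, RingHom.id_apply, Finset.mul_sum]
    exact Finset.sum_congr rfl fun i _ => by ring

@[simp] lemma pairL_apply (u x : Fin d → ℝ) : pairL u x = pairing u x := rfl

lemma subset_carrier {x : Fin d → ℝ} (hx : x ∈ P.verts) : x ∈ P.carrier :=
  subset_convexHull ℝ _ (by exact_mod_cast hx)

lemma le_on_carrier {f : (Fin d → ℝ) →ₗ[ℝ] ℝ} {c : ℝ} (h : ∀ x ∈ P.verts, f x ≤ c) :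
    ∀ x ∈ P.carrier, f x ≤ c := by
  intro x hx
  have : P.carrier ⊆ {x | f x ≤ c} :=
    convexHull_min (fun x hx => h x (by exact_mod_cast hx)) (convex_halfSpace_le f.isLinear c)
  exact this hx

lemma zero_mem (hP : P.Good) : (0 : Fin d → ℝ) ∈ P.carrier := interior_subset hP.refl.2.1

/-- Since `0` is an interior point, every nonzero functional is positive at some vertex. -/
lemma exists_pos (h0 : 0 ∈ interior P.carrier) {g : (Fin d → ℝ) →ₗ[ℝ] ℝ} (hg : g ≠ 0) :
    ∃ x ∈ P.verts, 0 < g x := by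
  by_contra! hcon
  have hle := le_on_carrier hcon
  obtain ⟨x, hx⟩ : ∃ x, 0 < g x := by
    by_contra! h
    apply hg
    ext x
    have h1 := h (Pi.single x 1)
    have h2 := h (-Pi.single x 1)
    rw [map_neg] at h2
    simp only [LinearMap.comp_apply, LinearMap.zero_apply, LinearMap.coe_single]
    linarith
  have hc : Filter.Tendsto (fun t : ℝ => t • x) (nhdsWithin 0 (Set.Ioi 0)) (nhds 0) := by
    have : Continuous (fun t : ℝ => t • x) := by fun_prop
    have h := this.tendsto 0
    rw [zero_smul] at h
    exact h.mono_left nhdsWithin_le_nhds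
  have hev := hc.eventually (mem_interior_iff_mem_nhds.1 h0)
  obtain ⟨t, ht, ht0⟩ := (hev.and self_mem_nhdsWithin).exists
  have := hle _ ht
  rw [map_smul, smul_eq_mul] at this
  have : 0 < t * g x := mul_pos ht0 hx
  linarith

lemma ne_zero_of_vert (hP : P.Good) {x : Fin d → ℝ} (hx : x ∈ P.verts) : x ≠ 0 := by
  rintro rfl
  have he := P.vertsExtreme 0 hx
  -- an interior point is the midpoint of a segment in the polytope
  have hc : Filter.Tendsto (fun t : ℝ => t • (fun _ : Fin d => (1 : ℝ)))
      (nhdsWithin 0 (Set.Ioi 0)) (nhds 0) := by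
    have : Continuous (fun t : ℝ => t • (fun _ : Fin d => (1 : ℝ))) := by fun_prop
    have h := this.tendsto 0
    rw [zero_smul] at h
    exact h.mono_left nhdsWithin_le_nhds
  have hn : P.carrier ∈ nhds (0 : Fin d → ℝ) := mem_interior_iff_mem_nhds.1 hP.refl.2.1
  have hc' := hc.neg
  rw [neg_zero] at hc'
  obtain ⟨t, ⟨ht, ht'⟩, ht0⟩ :=
    (((hc.eventually hn).and (hc'.eventually hn)).and self_mem_nhdsWithin).exists
  have := he.2 ht ht' ⟨1/2, 1/2, by norm_num, by norm_num, by norm_num, by simp⟩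
  have h2 := congrFun this ⟨0, hP.pos⟩
  simp at h2
  exact (ne_of_gt ht0) h2

/-- By terminality a nonzero lattice point of `P` is a vertex, so it is not the midpoint of two other
points of `P`. -/
lemma midpoint_false (hP : P.Good) {a b m : Fin d → ℝ} (ha : a ∈ P.carrier) (hb : b ∈ P.carrier)
    (hm : a + b = (2 : ℝ) • m) (hl : IsLatticePt m) (h0 : m ≠ 0) (hab : a ≠ m) : False := by
  have hmid : m ∈ openSegment ℝ a b := by
    refine ⟨1/2, 1/2, by norm_num, by norm_num, by norm_num, ?_⟩
    rw [← smul_add, hm, smul_smul]; norm_num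
  have hmc : m ∈ P.carrier :=
    (convex_convexHull ℝ _).segment_subset ha hb (openSegment_subset_segment _ _ _ hmid)
  rcases hP.term m hmc hl with h | h
  · exact h0 h
  · exact hab ((P.vertsExtreme m h).2 ha hb hmid)

lemma isLatticePt_add {x y : Fin d → ℝ} (hx : IsLatticePt x) (hy : IsLatticePt y) :
    IsLatticePt (x + y) := by
  intro i
  obtain ⟨a, ha⟩ := hx i
  obtain ⟨b, hb⟩ := hy i
  exact ⟨a + b, by simp [ha, hb]⟩

lemma isLatticePt_neg {x : Fin d → ℝ} (hx : IsLatticePt x) : IsLatticePt (-x) := by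
  intro i
  obtain ⟨a, ha⟩ := hx i
  exact ⟨-a, by simp [ha]⟩

lemma eq_of_eqOn_spanning {s : Set (Fin d → ℝ)} (hs : Submodule.span ℝ s = ⊤)
    {f g : (Fin d → ℝ) →ₗ[ℝ] ℝ} (h : ∀ x ∈ s, f x = g x) : f = g :=
  LinearMap.ext_on hs h

lemma exists_tight (hP : P.Good) {f} (hf : P.IsFct f) : ∃ x, x ∈ P.tight f := by
  by_contra! h
  have : P.tight f = ∅ := Finset.eq_empty_of_forall_notMem h
  have hs := hf.span
  rw [this] at hs
  simp only [Finset.coe_empty, Submodule.span_empty] at hs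
  have := congrArg (fun S : Submodule ℝ (Fin d → ℝ) => Module.finrank ℝ S) hs
  simp at this
  have := hP.pos
  omega

/-- The hyperplane `f = 1` cuts out a facet in the sense of `IsFacet`, so that simpliciality and
reflexivity apply to `f`. -/
lemma fct_isFacet (hP : P.Good) {f} (hf : P.IsFct f) :
    P.IsFacet {x | x ∈ P.carrier ∧ f x = 1} := by
  obtain ⟨u, hu⟩ := exists_pairing f
  obtain ⟨p, hp⟩ := exists_tight hP hf
  have hpG : p ∈ {x | x ∈ P.carrier ∧ f x = 1} :=
    ⟨subset_carrier (mem_tight.1 hp).1, (mem_tight.1 hp).2⟩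
  have hf0 : f ≠ 0 := by
    rintro rfl
    have := (mem_tight.1 hp).2
    simp at this
  refine ⟨⟨u, ?_, 1, ?_, ?_⟩, ⟨p, hpG⟩, ?_⟩
  · rintro rfl
    have := hu p
    rw [(mem_tight.1 hp).2] at this
    simp [pairing] at this
  · intro x hx; rw [hu]; exact le_on_carrier hf.le x hx
  · ext x; simp [hu]
  · set G := {x | x ∈ P.carrier ∧ f x = 1} with hG
    have hker : vectorSpan ℝ G ≤ LinearMap.ker f := by
      rw [vectorSpan, Submodule.span_le]
      rintro _ ⟨x, hx, y, hy, rfl⟩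
      simp [hx.2, hy.2]
    have hlt : Module.finrank ℝ (vectorSpan ℝ G) < d := by
      have hne : vectorSpan ℝ G ≠ ⊤ := by
        intro h
        rw [h, top_le_iff, LinearMap.ker_eq_top] at hker
        exact hf0 hker
      simpa using Submodule.finrank_lt hne
    have htop : vectorSpan ℝ G ⊔ Submodule.span ℝ {p} = ⊤ := by
      rw [eq_top_iff, ← hf.span, Submodule.span_le]
      intro x hx
      have hx' := mem_tight.1 (Finset.mem_coe.1 hx)
      have hxG : x ∈ G := ⟨subset_carrier hx'.1, hx'.2⟩
      have : x = (x - p) + p := by abel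
      rw [this]
      exact Submodule.add_mem_sup (vsub_mem_vectorSpan ℝ hxG hpG)
        (Submodule.mem_span_singleton_self p)
    have h1 := Submodule.finrank_add_le_finrank_add_finrank (vectorSpan ℝ G) (Submodule.span ℝ {p})
    rw [htop] at h1
    have h2 := finrank_span_le_card (R := ℝ) ({p} : Set (Fin d → ℝ))
    simp at h1 h2
    omega

lemma card_tight (hP : P.Good) {f} (hf : P.IsFct f) : (P.tight f).card = d := by
  have h := hP.simp _ (fct_isFacet hP hf)
  have : P.vertsOn {x | x ∈ P.carrier ∧ f x = 1} = (P.tight f : Set _) := by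
    ext x
    simp only [vertsOn, Set.mem_ofPred_eq, Finset.mem_coe, mem_tight]
    exact ⟨fun h => ⟨h.1, h.2.2⟩, fun h => ⟨h.1, subset_carrier h.1, h.2⟩⟩
  rw [this, Set.ncard_coe_finset] at h
  exact h

/-- The supporting functional of a facet of a reflexive polytope is integral. -/
lemma fct_int (hP : P.Good) {f} (hf : P.IsFct f) {x : Fin d → ℝ} (hx : IsLatticePt x) :
    ∃ n : ℤ, f x = n := by
  obtain ⟨u, hu⟩ := hP.refl.2.2 _ (fct_isFacet hP hf)
  have : f = pairL (fun i => (u i : ℝ)) := by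
    apply eq_of_eqOn_spanning hf.span
    intro x hx
    have hx := mem_tight.1 (Finset.mem_coe.1 hx)
    rw [pairL_apply, hu x ⟨subset_carrier hx.1, hx.2⟩, hx.2]
  choose z hz using hx
  refine ⟨∑ i, u i * z i, ?_⟩
  rw [this, pairL_apply, pairing]
  push_cast
  exact Finset.sum_congr rfl fun i _ => by rw [hz]

lemma exists_dual (hP : P.Good) {f} (hf : P.IsFct f) : ∃ a, DualTo (P.tight f) a := by
  classical
  have hcard : Fintype.card (P.tight f) = Module.finrank ℝ (Fin d → ℝ) := by
    simp [card_tight hP hf]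
  have hsp : ⊤ ≤ Submodule.span ℝ (Set.range (Subtype.val : P.tight f → Fin d → ℝ)) := by
    rw [Subtype.range_coe_subtype]; exact hf.span.ge
  let b : Module.Basis (P.tight f) ℝ (Fin d → ℝ) := basisOfTopLeSpanOfCardEqFinrank _ hsp hcard
  have hb : ∀ v, b v = v.1 := fun v => by simp [b]
  refine ⟨fun v => if h : v ∈ P.tight f then b.coord ⟨v, h⟩ else 0, ?_, ?_, ?_⟩
  · intro v hv
    have := b.repr_self ⟨v, hv⟩
    rw [hb] at this
    simp [hv, this]
  · intro v hv w hw hne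
    have := b.repr_self ⟨w, hw⟩
    rw [hb] at this
    simp [hv, this, hne]
  · intro x
    conv_lhs => rw [← b.sum_repr x]
    rw [← Finset.sum_coe_sort (P.tight f)]
    refine Finset.sum_congr rfl fun v _ => ?_
    simp [hb]

/-- The height of a point over a facet is the sum of its coordinates. -/
lemma DualTo.sum_eq {f} {a} (ha : DualTo (P.tight f) a) (x : Fin d → ℝ) :
    f x = ∑ v ∈ P.tight f, a v x := by
  conv_lhs => rw [ha.expand x]
  rw [map_sum]
  refine Finset.sum_congr rfl fun v hv => ?_
  rw [map_smul, (mem_tight.1 hv).2]; simp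

/-- Rotating the supporting hyperplane `f = 1` in the direction `g` until it meets a vertex with
`g > 0`. The parameter `t` is the least value of `(1 - f x) / g x` over the vertices with `g x > 0`. -/
lemma exists_push {f g : (Fin d → ℝ) →ₗ[ℝ] ℝ} (hf : ∀ x ∈ P.verts, f x ≤ 1)
    (hg : ∀ x ∈ P.tight f, g x ≤ 0) (hpos : ∃ x ∈ P.verts, 0 < g x) :
    ∃ t : ℝ, 0 < t ∧ (∀ x ∈ P.verts, (f + t • g) x ≤ 1) ∧
      ∃ x ∈ P.verts, 0 < g x ∧ (f + t • g) x = 1 := by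
  classical
  have hne : (P.verts.filter (fun x => 0 < g x)).Nonempty := by
    obtain ⟨x, hx, h⟩ := hpos
    exact ⟨x, by simp [hx, h]⟩
  obtain ⟨m, hm, hmin⟩ := Finset.exists_min_image _ (fun x => (1 - f x) / g x) hne
  rw [Finset.mem_filter] at hm
  have hfm : f m < 1 := by
    refine lt_of_le_of_ne (hf m hm.1) fun h => ?_
    have := hg m (mem_tight.2 ⟨hm.1, h⟩)
    linarith [hm.2]
  have ht : 0 < (1 - f m) / g m := div_pos (by linarith) hm.2
  refine ⟨_, ht, fun x hx => ?_, m, hm.1, hm.2, ?_⟩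
  · simp only [LinearMap.add_apply, LinearMap.smul_apply, smul_eq_mul]
    by_cases h : 0 < g x
    · have := hmin x (by simp [hx, h])
      rw [le_div_iff₀ h] at this
      linarith
    · have := mul_nonneg ht.le (sub_nonneg.2 (not_lt.1 h))
      linarith [hf x hx]
  · simp only [LinearMap.add_apply, LinearMap.smul_apply, smul_eq_mul]
    rw [div_mul_cancel₀ _ hm.2.ne']; ring

end Polytope

/-! ### Facet inequalities and sums of vertices -/

namespace Polytope

variable {d : ℕ} {P : Polytope d}

/-- A point outside `P` violates a facet inequality: among the functionals which are at most `1` on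
`P` and exceed `1` at the point, one with the most tight vertices is supporting for a facet, since
otherwise `exists_push` gives one with more. -/
lemma exists_isFct_one_lt (h0 : 0 ∈ interior P.carrier) {y : Fin d → ℝ} (hy : y ∉ P.carrier) :
    ∃ f, P.IsFct f ∧ 1 < f y := by
  classical
  have hclosed : IsClosed P.carrier :=
    (P.verts.finite_toSet.isCompact_convexHull ℝ).isClosed
  obtain ⟨f₀, c, hc, hcy⟩ :=
    geometric_hahn_banach_closed_point (convex_convexHull ℝ _) hclosed hy
  have hc0 : 0 < c := by simpa using hc 0 (interior_subset h0)
  let S : Set ℕ := {n | ∃ f : (Fin d → ℝ) →ₗ[ℝ] ℝ, (∀ x ∈ P.verts, f x ≤ 1) ∧ 1 < f y ∧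
    (P.tight f).card = n}
  have hne : S.Nonempty := by
    refine ⟨_, c⁻¹ • (f₀ : (Fin d → ℝ) →ₗ[ℝ] ℝ), fun x hx => ?_, ?_, rfl⟩
    · have := hc x (subset_carrier hx)
      simp only [LinearMap.smul_apply, smul_eq_mul, ContinuousLinearMap.coe_coe]
      rw [inv_mul_le_iff₀ hc0]; linarith
    · simp only [LinearMap.smul_apply, smul_eq_mul, ContinuousLinearMap.coe_coe]
      rw [lt_inv_mul_iff₀ hc0]; linarith
  have hbdd : BddAbove S := ⟨P.verts.card, by
    rintro n ⟨f, -, -, rfl⟩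
    exact Finset.card_le_card fun x hx => (mem_tight.1 hx).1⟩
  obtain ⟨f, hf, hfy, hn⟩ := Nat.sSup_mem hne hbdd
  refine ⟨f, ⟨hf, ?_⟩, hfy⟩
  by_contra hspan
  obtain ⟨g₀, hg₀, hker₀⟩ := Submodule.exists_le_ker_of_lt_top _ (lt_top_iff_ne_top.2 hspan)
  obtain ⟨g, hg, hker, hgy⟩ : ∃ g : (Fin d → ℝ) →ₗ[ℝ] ℝ, g ≠ 0 ∧
      (∀ x ∈ P.tight f, g x = 0) ∧ 0 ≤ g y := by
    have h1 : ∀ x ∈ P.tight f, g₀ x = 0 := fun x hx => hker₀ (Submodule.subset_span hx)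
    rcases le_total 0 (g₀ y) with h | h
    · exact ⟨g₀, hg₀, h1, h⟩
    · exact ⟨-g₀, neg_ne_zero.2 hg₀, fun x hx => by simp [h1 x hx], by simpa using h⟩
  obtain ⟨t, ht, hle, x, hx, hgx, hfx⟩ :=
    exists_push hf (fun x hx => (hker x hx).le) (exists_pos h0 hg)
  have hmem : (P.tight (f + t • g)).card ∈ S := by
    refine ⟨_, hle, ?_, rfl⟩
    simp only [LinearMap.add_apply, LinearMap.smul_apply, smul_eq_mul]
    have := mul_nonneg ht.le hgy
    linarith
  have hle' := le_csSup hbdd hmem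
  rw [← hn] at hle'
  have hlt : (P.tight f).card < (P.tight (f + t • g)).card := by
    apply Finset.card_lt_card
    refine ⟨fun w hw => ?_, fun hsub => ?_⟩
    · refine mem_tight.2 ⟨(mem_tight.1 hw).1, ?_⟩
      simp [(mem_tight.1 hw).2, hker w hw]
    · have := hker x (hsub (mem_tight.2 ⟨hx, hfx⟩))
      linarith
  omega

lemma mem_carrier_of_fct (hP : P.Good) {y : Fin d → ℝ} (h : ∀ f, P.IsFct f → f y ≤ 1) :
    y ∈ P.carrier := by
  by_contra hy
  obtain ⟨f, hf, hfy⟩ := exists_isFct_one_lt hP.refl.2.1 hy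
  exact absurd (h f hf) (not_le.2 hfy)

lemma vert_of_fct (hP : P.Good) {y : Fin d → ℝ} (hl : IsLatticePt y) (hy0 : y ≠ 0)
    (h : ∀ f, P.IsFct f → f y ≤ 1) : y ∈ P.verts :=
  (hP.term y (mem_carrier_of_fct hP h) hl).resolve_left hy0

/-- If two vertices lie on no common facet, integrality bounds the height of their sum by `1` over
every facet; so the sum lies in `P`, and terminality makes it `0` or a vertex. -/
lemma add_mem_verts (hP : P.Good) {p q : Fin d → ℝ} (hp : p ∈ P.verts) (hq : q ∈ P.verts)
    (h : ∀ f, P.IsFct f → f p = 1 → f q = 1 → False) (h0 : p + q ≠ 0) : p + q ∈ P.verts := by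
  refine vert_of_fct hP (isLatticePt_add (hP.refl.1 p hp) (hP.refl.1 q hq)) h0 fun f hf => ?_
  obtain ⟨m, hm⟩ := fct_int hP hf (hP.refl.1 p hp)
  obtain ⟨n, hn⟩ := fct_int hP hf (hP.refl.1 q hq)
  have h1 := hf.le p hp
  have h2 := hf.le q hq
  have h3 := h f hf
  rw [map_add]
  rw [hm] at h1 h3 ⊢
  rw [hn] at h2 h3 ⊢
  norm_cast at h1 h2 h3 ⊢
  by_contra hcon
  exact h3 (by omega) (by omega)

/-- Two pairs of vertices with equal sums cannot all lie on one facet, whose vertices are linearly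
independent; and a facet containing `p` and `q` would contain `r` and `s` too. So `add_mem_verts`
applies. -/
lemma add_mem_of_eq (hP : P.Good) {p q r s : Fin d → ℝ} (hp : p ∈ P.verts) (hq : q ∈ P.verts)
    (hr : r ∈ P.verts) (hs : s ∈ P.verts) (he : p + q = r + s) (hpr : r ≠ p) (hps : s ≠ p)
    (h0 : p + q ≠ 0) : p + q ∈ P.verts := by
  refine add_mem_verts hP hp hq (fun f hf h1 h2 => ?_) h0
  have h3 : f r + f s = 2 := by rw [← map_add, ← he, map_add, h1, h2]; norm_num
  have h4 := hf.le r hr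
  have h5 := hf.le s hs
  obtain ⟨a, ha⟩ := exists_dual hP hf
  have hpT : p ∈ P.tight f := mem_tight.2 ⟨hp, h1⟩
  have e := congrArg (a p) he
  rw [map_add, map_add, ha.self p hpT, ha.other p hpT r (mem_tight.2 ⟨hr, by linarith⟩) hpr,
    ha.other p hpT s (mem_tight.2 ⟨hs, by linarith⟩) hps] at e
  by_cases hqp : q = p
  · rw [hqp, ha.self p hpT] at e; norm_num at e
  · rw [ha.other p hpT q (mem_tight.2 ⟨hq, h2⟩) hqp] at e; norm_num at e

/-! ### Neighboring facets and heights -/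

/-- The facet neighboring `f` across its vertex `v` has supporting functional `f - k • a v` with `k` a
positive integer, and its vertices are those of `f` with `v` replaced by a single new vertex. -/
lemma exists_neighbor_s18 (hP : P.Good) {f} (hf : P.IsFct f) {a} (ha : DualTo (P.tight f) a)
    {v : Fin d → ℝ} (hv : v ∈ P.tight f) :
    ∃ (k : ℤ) (x₀ : Fin d → ℝ), 1 ≤ k ∧ x₀ ∈ P.verts ∧ a v x₀ < 0 ∧
      P.IsFct (f - (k : ℝ) • a v) ∧
      ∀ x, x ∈ P.tight (f - (k : ℝ) • a v) ↔ x = x₀ ∨ (x ∈ P.tight f ∧ x ≠ v) := by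
  classical
  have hg : -(a v) ≠ 0 := by
    intro h
    have := congrArg (fun l => l v) h
    simp [ha.self v hv] at this
  have hnonneg : ∀ x ∈ P.tight f, (-(a v)) x ≤ 0 := by
    intro x hx
    by_cases h : x = v
    · subst h; simp [ha.self x hx]
    · simp [ha.other v hv x hx h]
  obtain ⟨t, ht, hle, x₀, hx₀, hgx, hfx⟩ :=
    exists_push hf.le hnonneg (exists_pos hP.refl.2.1 hg)
  have heq : f + t • (-(a v)) = f - t • a v := by rw [smul_neg, sub_eq_add_neg]
  rw [heq] at hle hfx
  have hneg : a v x₀ < 0 := by simpa using hgx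
  have hsub : insert x₀ ((P.tight f).erase v) ⊆ P.tight (f - t • a v) := by
    intro x hx
    rw [Finset.mem_insert, Finset.mem_erase] at hx
    rcases hx with rfl | ⟨h1, h2⟩
    · exact mem_tight.2 ⟨hx₀, hfx⟩
    · refine mem_tight.2 ⟨(mem_tight.1 h2).1, ?_⟩
      simp [(mem_tight.1 h2).2, ha.other v hv x h2 h1]
  have hx₀T : x₀ ∉ P.tight f := fun h => by
    have := hnonneg x₀ h
    linarith
  have hfct : P.IsFct (f - t • a v) := by
    refine ⟨hle, ?_⟩
    rw [eq_top_iff, ← hf.span, Submodule.span_le]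
    have hold : ∀ x ∈ P.tight f, x ≠ v →
        x ∈ Submodule.span ℝ (P.tight (f - t • a v) : Set (Fin d → ℝ)) := fun x hx hxv =>
      Submodule.subset_span (hsub (by simp [hx, hxv]))
    intro x hx
    by_cases hxv : x = v
    · subst hxv
      have e := ha.expand x₀
      rw [← Finset.add_sum_erase _ _ hv] at e
      have e2 : x = (a x x₀)⁻¹ • (x₀ - ∑ w ∈ (P.tight f).erase x, a w x₀ • w) := by
        rw [eq_inv_smul_iff₀ hneg.ne, eq_sub_iff_add_eq]; exact e.symm
      have hs : (a x x₀)⁻¹ • (x₀ - ∑ w ∈ (P.tight f).erase x, a w x₀ • w) ∈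
          Submodule.span ℝ (P.tight (f - t • a x) : Set (Fin d → ℝ)) := by
        refine Submodule.smul_mem _ _ (Submodule.sub_mem _ (Submodule.subset_span
          (hsub (Finset.mem_insert_self _ _))) (Submodule.sum_mem _ fun w hw =>
            Submodule.smul_mem _ _ ?_))
        rw [Finset.mem_erase] at hw
        exact hold w hw.2 hw.1
      rwa [← e2] at hs
    · exact hold x hx hxv
  obtain ⟨n, hn⟩ := fct_int hP hfct (hP.refl.1 v (mem_tight.1 hv).1)
  simp only [LinearMap.sub_apply, LinearMap.smul_apply, smul_eq_mul, (mem_tight.1 hv).2,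
    ha.self v hv, mul_one] at hn
  have htk : t = ((1 - n : ℤ) : ℝ) := by push_cast; linarith
  refine ⟨1 - n, x₀, ?_, hx₀, hneg, htk ▸ hfct, fun x => ?_⟩
  · rw [htk] at ht; norm_cast at ht
  · rw [← htk]
    have hcard : (insert x₀ ((P.tight f).erase v)).card = d := by
      rw [Finset.card_insert_of_notMem (fun h => hx₀T (Finset.mem_of_mem_erase h)),
        Finset.card_erase_of_mem hv, card_tight hP hf]
      have := hP.pos
      omega
    rw [← Finset.eq_of_subset_of_card_le hsub (by rw [hcard, card_tight hP hfct])]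
    simp only [Finset.mem_insert, Finset.mem_erase]
    tauto

/-- The neighboring vertex `n v` is the only vertex at height `0` with a negative `v`-coordinate: the
height of such a vertex over the neighboring facet is a positive integer, hence `1`. -/
lemma eq_neighbor (hP : P.Good) {f} (hf : P.IsFct f) {a} (ha : DualTo (P.tight f) a) :
    ∃ n : (Fin d → ℝ) → (Fin d → ℝ), ∀ v ∈ P.tight f, ∃ k : ℤ, 1 ≤ k ∧
      P.IsFct (f - (k : ℝ) • a v) ∧
      (∀ x, x ∈ P.tight (f - (k : ℝ) • a v) ↔ x = n v ∨ (x ∈ P.tight f ∧ x ≠ v)) ∧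
      ∀ x ∈ P.verts, f x = 0 → a v x < 0 → x = n v := by
  classical
  choose! k x₀ h1 h2 h3 h4 h5 using fun v (hv : v ∈ P.tight f) => exists_neighbor_s18 hP hf ha hv
  refine ⟨x₀, fun v hv => ⟨k v, h1 v hv, h4 v hv, h5 v hv, fun x hx hx0 hneg => ?_⟩⟩
  obtain ⟨m, hm⟩ := fct_int hP (h4 v hv) (hP.refl.1 x hx)
  have hle := (h4 v hv).le x hx
  have hpos : 0 < (f - (k v : ℝ) • a v) x := by
    simp only [LinearMap.sub_apply, LinearMap.smul_apply, smul_eq_mul, hx0]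
    have : (0 : ℝ) < k v := by exact_mod_cast h1 v hv
    nlinarith
  have hone : (f - (k v : ℝ) • a v) x = 1 := by
    rw [hm] at hle hpos ⊢
    norm_cast at hle hpos ⊢
    omega
  rcases (h5 v hv x).1 (mem_tight.2 ⟨hx, hone⟩) with h | ⟨h, -⟩
  · exact h
  · have := (mem_tight.1 h).2
    linarith

/-- A nonzero vector on which the functional vanishes has a negative coordinate. -/
lemma exists_neg {f} {a} (ha : DualTo (P.tight f) a) {x : Fin d → ℝ} (hx : x ≠ 0) (h0 : f x = 0) :
    ∃ v ∈ P.tight f, a v x < 0 := by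
  by_contra! h
  rw [ha.sum_eq, Finset.sum_eq_zero_iff_of_nonneg h] at h0
  apply hx
  rw [ha.expand x]
  exact Finset.sum_eq_zero fun v hv => by rw [h0 v hv, zero_smul]

/-- The vertices of `P` on the hyperplane `f = 0`. -/
noncomputable def lev0 (P : Polytope d) (f : (Fin d → ℝ) →ₗ[ℝ] ℝ) : Finset (Fin d → ℝ) := by
  classical exact P.verts.filter (fun x => f x = 0)

lemma mem_lev0 {f : (Fin d → ℝ) →ₗ[ℝ] ℝ} {x : Fin d → ℝ} :
    x ∈ P.lev0 f ↔ x ∈ P.verts ∧ f x = 0 := by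
  simp [lev0]

lemma lev0_subset (hP : P.Good) {f} {a} (ha : DualTo (P.tight f) a)
    {n : (Fin d → ℝ) → (Fin d → ℝ)}
    (hn : ∀ v ∈ P.tight f, ∀ x ∈ P.verts, f x = 0 → a v x < 0 → x = n v) :
    P.lev0 f ⊆ (P.tight f).image n := by
  intro x hx
  obtain ⟨hx, h0⟩ := mem_lev0.1 hx
  obtain ⟨v, hv, hneg⟩ := exists_neg ha (ne_zero_of_vert hP hx) h0
  exact Finset.mem_image.2 ⟨v, hv, (hn v hv x hx h0 hneg).symm⟩

/-- Every vertex at height `0` is the neighboring vertex across one of the `d` vertices of the facet. -/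
lemma card_lev0 (hP : P.Good) {f} (hf : P.IsFct f) : (P.lev0 f).card ≤ d := by
  obtain ⟨a, ha⟩ := exists_dual hP hf
  obtain ⟨n, hn⟩ := eq_neighbor hP hf ha
  refine (Finset.card_le_card (lev0_subset (n := n) hP ha fun v hv => ?_)).trans
    (Finset.card_image_le.trans (card_tight hP hf).le)
  obtain ⟨k, -, -, -, h⟩ := hn v hv
  exact h

/-- `P` has `3d - 1` vertices and they sum to `0`. -/
structure Balanced (P : Polytope d) : Prop where
  sum : ∑ v ∈ P.verts, v = 0
  card : P.verts.card + 1 = 3 * d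

/-- Over any facet the heights sum to `0`, with `d` vertices at height `1` and at most `d` at height
`0`. This leaves at least `d - 1` vertices at negative heights summing to `-d`, so there is at most one
vertex below height `-1`, at height `-2`, and if it exists then exactly `d` vertices are at height `0`. -/
lemma levels (hP : P.Good) (hB : P.Balanced) {f} (hf : P.IsFct f) :
    (∀ x ∈ P.verts, -2 ≤ f x) ∧
    ∀ z ∈ P.verts, f z < -1 → f z = -2 ∧ (P.lev0 f).card = d ∧ ∀ x ∈ P.verts, x ≠ z → -1 ≤ f x := by
  classical
  choose! m hm using fun x (hx : x ∈ P.verts) => fct_int hP hf (hP.refl.1 x hx)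
  have hsumR : ∑ x ∈ P.verts, f x = 0 := by rw [← map_sum, hB.sum, map_zero]
  have hsum : ∑ x ∈ P.verts, m x = 0 := by
    rw [Finset.sum_congr rfl hm] at hsumR
    exact_mod_cast hsumR
  have hle : ∀ x ∈ P.verts, m x ≤ 1 := fun x hx => by
    have := hf.le x hx
    rw [hm x hx] at this
    exact_mod_cast this
  set S := P.verts.filter (fun x => m x < 0) with hS
  -- the vertices at nonnegative height
  have hT : P.verts.filter (fun x => ¬ m x < 0) = P.tight f ∪ P.lev0 f := by
    ext x
    simp only [Finset.mem_filter, Finset.mem_union, mem_tight, mem_lev0, ← and_or_left]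
    refine and_congr_right fun hx => ?_
    rw [hm x hx]
    norm_cast
    have := hle x hx
    omega
  have hdis : Disjoint (P.tight f) (P.lev0 f) := by
    rw [Finset.disjoint_left]
    intro x h1 h2
    have h1 := (mem_tight.1 h1).2
    rw [(mem_lev0.1 h2).2] at h1
    norm_num at h1
  have hc := Finset.card_filter_add_card_filter_not (s := P.verts) (fun x => m x < 0)
  have hs := Finset.sum_filter_add_sum_filter_not P.verts (fun x => m x < 0) m
  rw [hT] at hc hs
  rw [Finset.card_union_of_disjoint hdis, card_tight hP hf] at hc
  replace hc : S.card + (d + (P.lev0 f).card) = P.verts.card := hc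
  have e1 : ∑ x ∈ P.tight f, m x = d := by
    rw [Finset.sum_congr rfl (g := fun _ => (1 : ℤ)), Finset.sum_const, card_tight hP hf]
    · simp
    · intro x hx
      obtain ⟨hx, h⟩ := mem_tight.1 hx
      rw [hm x hx] at h
      exact_mod_cast h
  have e0 : ∑ x ∈ P.lev0 f, m x = 0 := by
    refine Finset.sum_eq_zero fun x hx => ?_
    obtain ⟨hx, h⟩ := mem_lev0.1 hx
    rw [hm x hx] at h
    exact_mod_cast h
  rw [Finset.sum_union hdis, e1, e0, hsum] at hs
  have hl := card_lev0 hP hf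
  have hB2 := hB.card
  -- the total depth below height `-1` is at most `1`
  have hsum1 : ∑ x ∈ S, (-1 - m x) = d - S.card := by
    rw [Finset.sum_sub_distrib]
    simp only [Finset.sum_const, nsmul_eq_mul]
    linarith
  have hnn : ∀ x ∈ S, 0 ≤ -1 - m x := fun x hx => by
    have := (Finset.mem_filter.1 hx).2
    omega
  have hlow : ∀ x ∈ P.verts, -2 ≤ m x := by
    intro x hx
    by_cases h : m x < 0
    · have := Finset.single_le_sum hnn (Finset.mem_filter.2 ⟨hx, h⟩)
      omega
    · omega
  refine ⟨fun x hx => by rw [hm x hx]; exact_mod_cast hlow x hx, fun z hz hfz => ?_⟩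
  rw [hm z hz] at hfz
  have hz1 : m z < -1 := by exact_mod_cast hfz
  have hzS : z ∈ S := Finset.mem_filter.2 ⟨hz, by omega⟩
  have h1 := hlow z hz
  have h2 := Finset.single_le_sum hnn hzS
  refine ⟨by rw [hm z hz]; exact_mod_cast (by omega : m z = -2), by omega, fun x hx hxz => ?_⟩
  rw [hm x hx]
  suffices -1 ≤ m x by exact_mod_cast this
  by_cases h : m x < 0
  · have h3 := Finset.add_le_sum hnn (Finset.mem_filter.2 ⟨hx, h⟩) hzS hxz
    omega
  · omega

/-- If some vertex lies at height `-2` over the facet `f`, then `n` is a bijection from the vertices of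
the facet onto the vertices at height `0`. Hence `n v` has no negative coordinate besides the one at
`v`, and `n v + v` is a lattice point of the facet, i.e. one of its vertices `w`. It follows that
`n v = w - v` and that the neighboring facet is `f - a v`. -/
lemma typeB (hP : P.Good) (hB : P.Balanced) {f} (hf : P.IsFct f) {z : Fin d → ℝ}
    (hz : z ∈ P.verts) (hfz : f z < -1) {a} (ha : DualTo (P.tight f) a)
    {v : Fin d → ℝ} (hv : v ∈ P.tight f) :
    ∃ w ∈ P.tight f, w ≠ v ∧ w - v ∈ P.verts ∧
      (∀ x ∈ P.verts, f x = 0 → a v x < 0 → x = w - v) ∧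
      P.IsFct (f - a v) ∧ ∀ x, x ∈ P.tight (f - a v) ↔ x = w - v ∨ (x ∈ P.tight f ∧ x ≠ v) := by
  classical
  obtain ⟨n, hn⟩ := eq_neighbor hP hf ha
  have hn' : ∀ v ∈ P.tight f, ∀ x ∈ P.verts, f x = 0 → a v x < 0 → x = n v := fun v hv => by
    obtain ⟨k, -, -, -, h⟩ := hn v hv
    exact h
  have hcard := ((levels hP hB hf).2 z hz hfz).2.1
  have hsub := lev0_subset hP ha hn'
  have himg : (P.tight f).image n = P.lev0 f :=
    (Finset.eq_of_subset_of_card_le hsub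
      (by rw [hcard]; exact Finset.card_image_le.trans (card_tight hP hf).le)).symm
  have hinj : Set.InjOn n (P.tight f) := by
    rw [← Finset.card_image_iff, himg, hcard, card_tight hP hf]
  have hnv : n v ∈ P.lev0 f := himg ▸ Finset.mem_image_of_mem n hv
  obtain ⟨hnV, hn0⟩ := mem_lev0.1 hnv
  have hothers : ∀ u ∈ P.tight f, u ≠ v → 0 ≤ a u (n v) := fun u hu huv => by
    by_contra! h
    exact huv (hinj hu hv (hn' u hu _ hnV hn0 h).symm)
  have hneg : a v (n v) < 0 := by
    obtain ⟨u, hu, h⟩ := exists_neg ha (ne_zero_of_vert hP hnV) hn0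
    by_cases huv : u = v
    · rwa [huv] at h
    · exact absurd (hothers u hu huv) (not_le.2 h)
  obtain ⟨k, hk, hfct, htight, -⟩ := hn v hv
  have hkR : (1 : ℝ) ≤ k := by exact_mod_cast hk
  have hone : f (n v) - k * a v (n v) = 1 := by
    simpa using (mem_tight.1 ((htight (n v)).2 (Or.inl rfl))).2
  rw [hn0] at hone
  have hge : -1 ≤ a v (n v) := by nlinarith
  -- all coordinates of the lattice point `n v + v` are nonnegative, so it lies on the facet
  have hfw : f (n v + v) = 1 := by rw [map_add, hn0, (mem_tight.1 hv).2, zero_add]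
  have hcoef : ∀ u ∈ P.tight f, 0 ≤ a u (n v + v) := fun u hu => by
    rw [map_add]
    by_cases huv : u = v
    · rw [huv, ha.self v hv]; linarith
    · rw [ha.other u hu v hv (Ne.symm huv)]; linarith [hothers u hu huv]
  have hmem : n v + v ∈ P.carrier := by
    rw [ha.expand (n v + v)]
    refine (convex_convexHull ℝ _).sum_mem hcoef ?_ fun u hu => subset_carrier (mem_tight.1 hu).1
    rw [← ha.sum_eq, hfw]
  have hwV : n v + v ∈ P.verts := by
    refine (hP.term _ hmem
      (isLatticePt_add (hP.refl.1 _ hnV) (hP.refl.1 v (mem_tight.1 hv).1))).resolve_left fun h => ?_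
    rw [h, map_zero] at hfw; norm_num at hfw
  have hwT : n v + v ∈ P.tight f := mem_tight.2 ⟨hwV, hfw⟩
  have hwv : n v + v ≠ v := fun h => ne_zero_of_vert hP hnV (by simpa using h)
  have hav := ha.other v hv _ hwT hwv
  rw [map_add, ha.self v hv] at hav
  have hk1 : (k : ℝ) = 1 := by
    rw [show a v (n v) = -1 by linarith] at hone
    linarith
  rw [hk1, one_smul] at hfct htight
  refine ⟨n v + v, hwT, hwv, ?_, ?_, hfct, ?_⟩ <;> rw [add_sub_cancel_right]
  · exact hnV
  · exact hn' v hv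
  · exact htight

end Polytope

/-! ### Excluding vertices at height `-2` -/

namespace Polytope

variable {d : ℕ} {P : Polytope d}

/-- A vertex at height `-2` over a facet is `-p - q` for two distinct vertices `p`, `q` of the facet:
its coordinates are nonpositive integers summing to `-2`, as it is at height at least `-2` over every
neighboring facet. -/
lemma level_two_form (hP : P.Good) (hB : P.Balanced) {f} (hf : P.IsFct f) {z : Fin d → ℝ}
    (hz : z ∈ P.verts) (hfz : f z < -1) {a} (ha : DualTo (P.tight f) a) :
    ∃ p ∈ P.tight f, ∃ q ∈ P.tight f, p ≠ q ∧ z = -p - q := by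
  classical
  have hz2 : f z = -2 := ((levels hP hB hf).2 z hz hfz).1
  have hint : ∀ v ∈ P.tight f, ∃ n : ℤ, a v z = n ∧ n ≤ 0 := by
    intro v hv
    obtain ⟨w, -, -, -, -, hfct, -⟩ := typeB hP hB hf hz hfz ha hv
    obtain ⟨n, hn⟩ := fct_int hP hfct (hP.refl.1 z hz)
    have h := (levels hP hB hfct).1 z hz
    rw [LinearMap.sub_apply, hz2] at hn h
    refine ⟨-2 - n, by push_cast; linarith, ?_⟩
    have : ((-2 - n : ℤ) : ℝ) ≤ ((0 : ℤ) : ℝ) := by push_cast; linarith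
    exact_mod_cast this
  have hle1 : ∀ v ∈ P.tight f, a v z < 0 → a v z ≤ -1 := by
    intro v hv h
    obtain ⟨n, hn, -⟩ := hint v hv
    rw [hn] at h ⊢
    norm_cast at h ⊢
    exact_mod_cast (by omega : n ≤ -1)
  have hneg : ∃ p ∈ P.tight f, a p z < 0 := by
    by_contra! h
    have h2 := Finset.sum_nonneg h
    rw [← ha.sum_eq, hz2] at h2
    norm_num at h2
  obtain ⟨p, hp, hpz⟩ := hneg
  have hp1 := hle1 p hp hpz
  have hfp := (mem_tight.1 hp).2
  -- `z + p` has height `-1`, so it again has a negative coordinate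
  have hneg2 : ∃ q ∈ P.tight f, a q (z + p) < 0 := by
    by_contra! h
    have h2 := Finset.sum_nonneg h
    rw [← ha.sum_eq, map_add, hz2, hfp] at h2
    norm_num at h2
  obtain ⟨q, hq, hqz⟩ := hneg2
  have hfq := (mem_tight.1 hq).2
  have hap : ∀ u ∈ P.tight f, a u p = if u = p then 1 else 0 := fun u hu => by
    split_ifs with h
    · rw [h]; exact ha.self p hp
    · exact ha.other u hu p hp (Ne.symm h)
  have haq : ∀ u ∈ P.tight f, a u q = if u = q then 1 else 0 := fun u hu => by
    split_ifs with h
    · rw [h]; exact ha.self q hq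
    · exact ha.other u hu q hq (Ne.symm h)
  have hzero : z + p + q = 0 := by
    by_contra hne
    have h0 : f (-(z + p + q)) = 0 := by
      rw [map_neg, map_add, map_add, hz2, hfp, hfq]; norm_num
    obtain ⟨u, hu, h⟩ := exists_neg ha (neg_ne_zero.2 hne) h0
    rw [map_neg, map_add, map_add, hap u hu, haq u hu] at h
    rw [map_add, hap q hq] at hqz
    have hu1 := hle1 u hu
    obtain ⟨n, hn, hn0⟩ := hint u hu
    obtain ⟨m, hm, hm0⟩ := hint q hq
    rw [hn] at h hu1
    by_cases huq : u = q
    · have hnm : n = m := by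
        rw [huq, hm] at hn; exact_mod_cast hn.symm
      rw [hm, ← hnm] at hqz
      rw [if_pos huq] at h
      rw [← huq] at hqz
      split_ifs at h hqz <;> norm_cast at h hqz <;> omega
    · rw [if_neg huq] at h
      -- if `u = p`, the coordinate `a p z ≤ -1` leaves nothing positive after adding `p`
      by_cases hup : u = p
      · rw [if_pos hup, ← hn, hup] at h
        linarith
      · rw [if_neg hup] at h
        norm_cast at h
        omega
  have hzeq : z = -p - q := by
    rw [eq_sub_iff_add_eq, eq_neg_iff_add_eq_zero, ← hzero]; abel
  refine ⟨p, hp, q, hq, ?_, hzeq⟩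
  rintro rfl
  -- otherwise the lattice point `-p` is the midpoint of `0` and `z`
  have hpV := (mem_tight.1 hp).1
  refine midpoint_false hP (zero_mem hP) (subset_carrier hz) (m := -p) ?_
    (isLatticePt_neg (hP.refl.1 p hpV)) (neg_ne_zero.2 (ne_zero_of_vert hP hpV))
    (neg_ne_zero.2 (ne_zero_of_vert hP hpV)).symm
  rw [hzeq, two_smul]; abel

/-- No facet has a vertex at height `-2`. Such a vertex would be `z = -p - q`, with `c - p`, `k - q`
and `b - c` the neighboring vertices across `p`, `q` and `c`; applying `typeB` to the facet across `c`
gives the further vertex `b - c - p`. Relations between sums of pairs of these vertices are then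
contradictory by `add_mem_of_eq`. -/
lemma neg_one_le (hP : P.Good) (hB : P.Balanced) {f} (hf : P.IsFct f) {z : Fin d → ℝ}
    (hz : z ∈ P.verts) : -1 ≤ f z := by
  by_contra! hfz
  obtain ⟨a, ha⟩ := exists_dual hP hf
  obtain ⟨p, hp, q, hq, hpq, hzpq⟩ := level_two_form hP hB hf hz hfz ha
  have hz2 : f z = -2 := ((levels hP hB hf).2 z hz hfz).1
  have hpV := (mem_tight.1 hp).1
  have hqV := (mem_tight.1 hq).1
  have hval : ∀ w ∈ P.tight f, f w = 1 := fun w hw => (mem_tight.1 hw).2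
  obtain ⟨c, hc, hcp, hxp, hxpu, -, -⟩ := typeB hP hB hf hz hfz ha hp
  obtain ⟨k, hk, hkq, hxq, -, -, -⟩ := typeB hP hB hf hz hfz ha hq
  have hfx : f (c - p) = 0 := by rw [map_sub, hval c hc, hval p hp, sub_self]
  have hfxq : f (k - q) = 0 := by rw [map_sub, hval k hk, hval q hq, sub_self]
  have hcq : c ≠ q := by
    rintro rfl
    refine midpoint_false hP (subset_carrier hxp) (subset_carrier hz) (m := -p) ?_
      (isLatticePt_neg (hP.refl.1 p hpV)) (neg_ne_zero.2 (ne_zero_of_vert hP hpV)) ?_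
    · rw [hzpq, two_smul]; abel
    · intro h
      have := congrArg f h
      rw [hfx, map_neg, hval p hp] at this
      norm_num at this
  have hkp : k ≠ p := by
    rintro rfl
    refine midpoint_false hP (subset_carrier hxq) (subset_carrier hz) (m := -q) ?_
      (isLatticePt_neg (hP.refl.1 q hqV)) (neg_ne_zero.2 (ne_zero_of_vert hP hqV)) ?_
    · rw [hzpq, two_smul]; abel
    · intro h
      have := congrArg f h
      rw [hfxq, map_neg, hval q hq] at this
      norm_num at this
  obtain ⟨b, hb, hbc, hxc, -, hfctc, htc⟩ := typeB hP hB hf hz hfz ha hc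
  have hfxc : f (b - c) = 0 := by rw [map_sub, hval b hb, hval c hc, sub_self]
  -- the neighboring facet across `c` contains `p` and still has `z` at height `-2`, and its
  -- neighboring vertex across `p` can only be `b - c - p`
  have hy : b - c - p ∈ P.verts := by
    obtain ⟨a', ha'⟩ := exists_dual hP hfctc
    have hpc : p ∈ P.tight (f - a c) := (htc p).2 (Or.inr ⟨hp, hcp.symm⟩)
    have hzc : (f - a c) z < -1 := by
      rw [LinearMap.sub_apply, hz2, hzpq, map_sub, map_neg, ha.other c hc p hp hcp.symm,
        ha.other c hc q hq hcq.symm]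
      norm_num
    obtain ⟨r, hr, hrp, hrV, -⟩ := typeB hP hB hfctc hz hzc ha' hpc
    rcases (htc r).1 hr with h | ⟨hrT, hrc⟩
    · rwa [h] at hrV
    · have := hxpu (r - p) hrV (by rw [map_sub, hval r hrT, hval p hp, sub_self])
        (by rw [map_sub, ha.other p hp r hrT hrp, ha.self p hp]; norm_num)
      exact absurd (sub_left_injective this) hrc
  have hfy : f (b - c - p) = -1 := by rw [map_sub, hfxc, hval p hp]; norm_num
  have ne_of_f : ∀ {x y : Fin d → ℝ}, f x ≠ f y → x ≠ y := fun h e => h (by rw [e])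
  by_cases hbp : b = p
  · -- `z + q = -p` is also the sum of the vertices `c - p` and `-c`
    have e1 : z + q = (c - p) + (b - c - p) := by rw [hzpq, hbp]; abel
    have e2 : z + q = -p := by rw [hzpq]; abel
    have hnp := add_mem_of_eq hP hz hqV hxp hy e1 (ne_of_f (by rw [hfx, hz2]; norm_num))
      (ne_of_f (by rw [hfy, hz2]; norm_num)) (by rw [e2]; exact neg_ne_zero.2 (ne_zero_of_vert hP hpV))
    rw [e2] at hnp
    -- hence `z + k = -p + (k - q)` is a vertex
    have hfzk : f (z + k) = -1 := by rw [map_add, hz2, hval k hk]; norm_num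
    have hzk := add_mem_of_eq hP hz (mem_tight.1 hk).1 hnp hxq (by rw [hzpq]; abel)
      (ne_of_f (by rw [map_neg, hval p hp, hz2]; norm_num))
      (ne_of_f (by rw [hfxq, hz2]; norm_num))
      (fun h => by rw [h, map_zero] at hfzk; norm_num at hfzk)
    -- across `k` both `z` and `z + k` would be at height `-2`
    obtain ⟨-, -, -, -, -, hfctk, -⟩ := typeB hP hB hf hz hfz ha hk
    have hakz : a k z = 0 := by
      rw [hzpq, map_sub, map_neg, ha.other k hk p hp hkp.symm, ha.other k hk q hq hkq.symm]
      norm_num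
    have h1 := ((levels hP hB hfctk).2 z hz (by
      rw [LinearMap.sub_apply, hz2, hakz]; norm_num)).2.2 (z + k) hzk
        (ne_of_f (by rw [hfzk, hz2]; norm_num))
    rw [LinearMap.sub_apply, hfzk, map_add, hakz, ha.self k hk] at h1
    norm_num at h1
  · -- `y + c = b - p` is also the sum of `c - p` and `b - c`
    have e1 : (b - c - p) + c = (c - p) + (b - c) := by abel
    have e2 : (b - c - p) + c = b - p := by abel
    have hbpV := add_mem_of_eq hP hy (mem_tight.1 hc).1 hxp hxc e1
      (ne_of_f (by rw [hfx, hfy]; norm_num)) (ne_of_f (by rw [hfxc, hfy]; norm_num))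
      (by rw [e2]; exact sub_ne_zero.2 hbp)
    rw [e2] at hbpV
    have := hxpu (b - p) hbpV (by rw [map_sub, hval b hb, hval p hp, sub_self])
      (by rw [map_sub, ha.other p hp b hb hbp, ha.self p hp]; norm_num)
    exact hbc (sub_left_injective this)

/-- All heights are at least `-1`, so `-x` satisfies every facet inequality. -/
lemma neg_mem (hP : P.Good) (hB : P.Balanced) {x : Fin d → ℝ} (hx : x ∈ P.verts) :
    -x ∈ P.verts := by
  refine vert_of_fct hP (isLatticePt_neg (hP.refl.1 x hx))
    (neg_ne_zero.2 (ne_zero_of_vert hP hx)) fun f hf => ?_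
  rw [map_neg]
  linarith [neg_one_le hP hB hf hx]

/-- A finite set of nonzero vectors closed under negation has even cardinality. -/
lemma even_card {V : Finset (Fin d → ℝ)} (h0 : ∀ x ∈ V, x ≠ 0) (hV : ∀ x ∈ V, -x ∈ V) :
    Even V.card := by
  classical
  have h : (∑ _x ∈ V, (1 : ZMod 2)) = 0 := by
    refine Finset.sum_involution (fun x _ => -x) (fun x _ => by decide) (fun x hx _ => ?_)
      (fun x hx => hV x hx) (fun x _ => neg_neg x)
    exact fun h => h0 x hx (self_eq_neg.1 h.symm)
  rw [Finset.sum_const, nsmul_eq_mul, mul_one] at h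
  exact (ZMod.natCast_eq_zero_iff_even).1 h

/-! ### The special facet -/

/-- A facet in the sense of `IsFacet` is given by a supporting functional. -/
lemma isFct_of_isFacet (hP : P.Good) {F : Set (Fin d → ℝ)} (hF : P.IsFacet F)
    {uF : Fin d → ℝ} (huF : P.IsUF F uF) :
    P.IsFct (pairL uF) ∧ ∀ x, x ∈ P.tight (pairL uF) → x ∈ F := by
  classical
  obtain ⟨⟨u, hu0, c, hle, hFeq⟩, ⟨p, hpF⟩, hrank⟩ := hF
  have hle' : ∀ x ∈ P.carrier, pairL u x ≤ c := hle
  have hg0 : pairL u ≠ 0 := by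
    intro h
    apply hu0
    ext i
    have := congrArg (fun l => l (Pi.single i 1)) h
    simpa [pairing, Pi.single_apply] using this
  obtain ⟨x₁, hx₁, hpos⟩ := exists_pos hP.refl.2.1 hg0
  have hc : 0 < c := hpos.trans_le (hle' x₁ (subset_carrier hx₁))
  have hFmem : ∀ x, x ∈ F ↔ x ∈ P.carrier ∧ pairL u x = c := fun x => by rw [hFeq]; rfl
  -- `F` spans the ambient space linearly
  have hnot : p ∉ vectorSpan ℝ F := by
    intro h
    have hker : vectorSpan ℝ F ≤ LinearMap.ker (pairL u) := by
      rw [vectorSpan, Submodule.span_le]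
      rintro _ ⟨x, hx, y, hy, rfl⟩
      simp only [vsub_eq_sub, SetLike.mem_coe, LinearMap.mem_ker]
      rw [map_sub, ((hFmem x).1 hx).2, ((hFmem y).1 hy).2, sub_self]
    have := hker h
    rw [LinearMap.mem_ker, ((hFmem p).1 hpF).2] at this
    exact hc.ne' this
  have hspanF : Submodule.span ℝ F = ⊤ := by
    have hlt : vectorSpan ℝ F < Submodule.span ℝ F := by
      refine lt_of_le_of_ne ?_ fun h => hnot (h ▸ Submodule.subset_span hpF)
      rw [vectorSpan, Submodule.span_le]
      rintro _ ⟨x, hx, y, hy, rfl⟩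
      exact Submodule.sub_mem _ (Submodule.subset_span hx) (Submodule.subset_span hy)
    have h1 := Submodule.finrank_lt_finrank_of_lt hlt
    have h2 := Submodule.finrank_le (Submodule.span ℝ F)
    apply Submodule.eq_top_of_finrank_eq
    have := hP.pos
    simp only [Module.finrank_fin_fun] at h2 ⊢
    omega
  have huF' : pairL uF = c⁻¹ • pairL u := by
    apply eq_of_eqOn_spanning hspanF
    intro x hx
    rw [pairL_apply, huF x hx, LinearMap.smul_apply, ((hFmem x).1 hx).2, smul_eq_mul,
      inv_mul_cancel₀ hc.ne']
  have hmem : ∀ x ∈ P.tight (pairL uF), x ∈ F := by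
    intro x hx
    obtain ⟨hx, h⟩ := mem_tight.1 hx
    refine (hFmem x).2 ⟨subset_carrier hx, ?_⟩
    rw [huF', LinearMap.smul_apply, smul_eq_mul, inv_mul_eq_iff_eq_mul₀ hc.ne', mul_one] at h
    exact h
  have hle1 : ∀ x ∈ P.verts, pairL uF x ≤ 1 := by
    intro x hx
    rw [huF', LinearMap.smul_apply, smul_eq_mul, inv_mul_le_iff₀ hc, mul_one]
    exact hle' x (subset_carrier hx)
  refine ⟨⟨hle1, ?_⟩, hmem⟩
  rw [eq_top_iff, ← hspanF, Submodule.span_le]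
  intro x hx
  -- a convex combination of vertices lying on `F` uses only vertices on `F`
  have hxc := ((hFmem x).1 hx).1
  have hx1 : pairL uF x = 1 := huF x hx
  rw [carrier, Finset.mem_convexHull'] at hxc
  obtain ⟨w, hw0, hw1, hwx⟩ := hxc
  have hsum : ∑ y ∈ P.verts, w y * (1 - pairL uF y) = 0 := by
    have : pairL uF x = ∑ y ∈ P.verts, w y * pairL uF y := by
      rw [← hwx, map_sum]; simp only [map_smul, smul_eq_mul]
    simp only [mul_sub, mul_one, Finset.sum_sub_distrib]
    rw [hw1, ← this, hx1, sub_self]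
  rw [Finset.sum_eq_zero_iff_of_nonneg
    fun y hy => mul_nonneg (hw0 y hy) (sub_nonneg.2 (hle1 y hy))] at hsum
  rw [SetLike.mem_coe, ← hwx]
  refine Submodule.sum_mem _ fun y hy => ?_
  rcases mul_eq_zero.1 (hsum y hy) with h | h
  · rw [h, zero_smul]; exact Submodule.zero_mem _
  · exact Submodule.smul_mem _ _ (Submodule.subset_span (mem_tight.2 ⟨hy, by linarith⟩))

/-- The coordinates of the vertex sum with respect to a special facet are nonnegative; if its height
is `0`, they all vanish. -/
lemma sum_eq_zero_of_special (hP : P.Good) {F : Set (Fin d → ℝ)} (hF : P.IsSpecialFacet F)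
    {uF : Fin d → ℝ} (huF : P.IsUF F uF) (hsum : ∑ x ∈ P.verts, pairL uF x = 0) :
    ∑ x ∈ P.verts, x = 0 := by
  classical
  obtain ⟨hfct, hmem⟩ := isFct_of_isFacet hP hF.1 huF
  obtain ⟨a, ha⟩ := exists_dual hP hfct
  have htight : ∀ w, w ∈ P.vertsOn F → w ∈ P.tight (pairL uF) := fun w hw =>
    mem_tight.2 ⟨hw.1, huF w hw.2⟩
  have hnn : ∀ v ∈ P.tight (pairL uF), 0 ≤ a v (∑ x ∈ P.verts, x) := by
    intro v hv
    obtain ⟨u, hu⟩ := exists_pairing (a v)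
    have := hF.2 v ⟨(mem_tight.1 hv).1, hmem v hv⟩ u
      ⟨by rw [hu, ha.self v hv], fun w hw hne => by rw [hu, ha.other v hv w (htight w hw) hne]⟩
    rwa [hu] at this
  have h0 : pairL uF (∑ x ∈ P.verts, x) = 0 := by rw [map_sum, hsum]
  rw [ha.sum_eq, Finset.sum_eq_zero_iff_of_nonneg hnn] at h0
  rw [ha.expand (∑ x ∈ P.verts, x)]
  exact Finset.sum_eq_zero fun v hv => by rw [h0 v hv, zero_smul]

end Polytope

/-- Case 3: if a terminal simplicial reflexive `d`-polytope with `3d - 1` vertices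
has a special facet `F` with exactly `d - 1` vertices on `H(F,0)` and exactly `d`
vertices on `H(F,-1)`, then `P` is centrally symmetric and `d` is odd. -/
theorem case_three_centrally_symmetric {d : ℕ} (P : Polytope d)
    (hrefl : P.IsReflexive) (hsimp : P.IsSimplicial) (hterm : P.IsTerminal)
    (hcard : (P.verts.card : ℤ) = 3 * d - 1)
    (F : Set (Fin d → ℝ)) (hF : P.IsSpecialFacet F)
    (uF : Fin d → ℝ) (huF : P.IsUF F uF)
    (h0 : ({x | x ∈ P.verts ∧ pairing uF x = 0}.ncard : ℤ) = (d : ℤ) - 1)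
    (hm1 : ({x | x ∈ P.verts ∧ pairing uF x = -1}.ncard : ℤ) = (d : ℤ)) :
    (∀ x ∈ P.verts, -x ∈ P.verts) ∧ Odd d := by
  have hd : 1 ≤ d := by
    have : (0 : ℤ) ≤ P.verts.card := Int.natCast_nonneg _
    omega
  have hP : P.Good := ⟨hrefl, hsimp, hterm, hd⟩
  classical
  obtain ⟨hfct, -⟩ := Polytope.isFct_of_isFacet hP hF.1 huF
  have e0 : {x | x ∈ P.verts ∧ pairing uF x = 0} =
      ((P.verts.filter fun x => pairing uF x = 0 : Finset _) : Set (Fin d → ℝ)) := by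
    ext x; simp
  have e1 : {x | x ∈ P.verts ∧ pairing uF x = -1} =
      ((P.verts.filter fun x => pairing uF x = -1 : Finset _) : Set (Fin d → ℝ)) := by
    ext x; simp
  rw [e0, Set.ncard_coe_finset] at h0
  rw [e1, Set.ncard_coe_finset] at hm1
  have hc1 : (P.verts.filter fun x => pairing uF x = 1).card = d := by
    refine Eq.trans ?_ (Polytope.card_tight hP hfct)
    congr 1
  set A := P.verts.filter fun x => pairing uF x = 1 with hA
  set B := P.verts.filter fun x => pairing uF x = 0 with hB
  set C := P.verts.filter fun x => pairing uF x = -1 with hC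
  have hAB : Disjoint A B := by
    rw [Finset.disjoint_filter]; intro x _ h1 h2; rw [h1] at h2; norm_num at h2
  have hABC : Disjoint (A ∪ B) C := by
    rw [Finset.disjoint_union_left, Finset.disjoint_filter, Finset.disjoint_filter]
    constructor <;> (intro x _ h1 h2; rw [h1] at h2; norm_num at h2)
  -- the three heights already account for all `3d - 1` vertices
  have hV : A ∪ B ∪ C = P.verts := by
    refine Finset.eq_of_subset_of_card_le ?_ ?_
    · exact Finset.union_subset (Finset.union_subset (Finset.filter_subset _ _)
        (Finset.filter_subset _ _)) (Finset.filter_subset _ _)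
    · rw [Finset.card_union_of_disjoint hABC, Finset.card_union_of_disjoint hAB]
      omega
  have hsum : ∑ x ∈ P.verts, Polytope.pairL uF x = 0 := by
    rw [← hV, Finset.sum_union hABC, Finset.sum_union hAB]
    have sA : ∑ x ∈ A, Polytope.pairL uF x = ∑ _x ∈ A, (1 : ℝ) :=
      Finset.sum_congr rfl fun x hx => (Finset.mem_filter.1 hx).2
    have sB : ∑ x ∈ B, Polytope.pairL uF x = ∑ _x ∈ B, (0 : ℝ) :=
      Finset.sum_congr rfl fun x hx => (Finset.mem_filter.1 hx).2
    have sC : ∑ x ∈ C, Polytope.pairL uF x = ∑ _x ∈ C, (-1 : ℝ) :=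
      Finset.sum_congr rfl fun x hx => (Finset.mem_filter.1 hx).2
    have hCd : C.card = d := by exact_mod_cast hm1
    rw [sA, sB, sC]
    simp [hc1, hCd]
  have hBal : P.Balanced := ⟨Polytope.sum_eq_zero_of_special hP hF huF hsum, by omega⟩
  have hneg : ∀ x ∈ P.verts, -x ∈ P.verts := fun x hx => Polytope.neg_mem hP hBal hx
  refine ⟨hneg, ?_⟩
  obtain ⟨m, hm⟩ := Polytope.even_card (fun x hx => Polytope.ne_zero_of_vert hP hx) hneg
  rw [← Nat.not_even_iff_odd]
  rintro ⟨n, hn⟩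
  omega
end

section
/- Let P ⊂ N_ℝ be a simplicial d-polytope containing the origin in its interior. For a facet F of P, let vol(F) denote the volume of the d-simplex conv({0} ∪ V(F)). Then for any facet F and any vertex v of F, vol(N(F,v)) = |⟨u_F^v, n(F,v)⟩| · vol(F), where n(F,v) is the neighboring vertex of F with respect to v. -/
/-!
The matrix `A` of the vertices of `F` satisfies `A u = e_i`, where `u` is the dual element of
the vertex `v` in row `i`. Multiplying by the adjugate gives `adj(A) e_i = det(A) u`, and expanding
along row `i` shows that replacing this row by `y` multiplies the determinant by `⟨u, y⟩`
(`det_updateRow_of_mulVec_eq_single`); no invertibility of `A` is needed.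

The rows of the new matrix are `d` distinct vertices of `F'`, and `F'` has only `d` vertices, so
the given enumeration of the vertices of `F'` differs from these rows by a permutation, which does
not affect the absolute value of the determinant (`abs_det_eq_of_forall_mem_range`).
-/

open Finset

/-- If `A u = e_i`, then replacing row `i` of `A` by `y` multiplies the determinant by `⟨u, y⟩`,
even when `A` is singular. -/
lemma det_updateRow_of_mulVec_eq_single {d : ℕ} (A : Matrix (Fin d) (Fin d) ℝ) (i : Fin d)
    (u y : Fin d → ℝ) (hu : A.mulVec u = Pi.single i 1) :
    (A.updateRow i y).det = pairing u y * A.det := by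
  have hcol : ∀ j, A.adjugate j i = A.det * u j := by
    intro j
    have h := congrFun (congrArg (A.adjugate.mulVec) hu) j
    rw [Matrix.mulVec_mulVec, Matrix.adjugate_mul, Matrix.smul_mulVec, Matrix.one_mulVec,
      Matrix.mulVec_single_one] at h
    simpa using h.symm
  rw [← Matrix.cramer_transpose_apply, Matrix.cramer_eq_adjugate_mulVec,
    ← Matrix.adjugate_transpose]
  simp only [Matrix.mulVec, dotProduct, Matrix.transpose_apply, hcol, pairing, Finset.sum_mul]
  exact Finset.sum_congr rfl fun j _ => by ring

/-- Distinct rows of `C` that all occur among the equally many rows of `B` are a permutation of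
them. -/
lemma abs_det_eq_of_forall_mem_range {d : ℕ} (B C : Fin d → (Fin d → ℝ))
    (hC : Function.Injective C) (h : ∀ j, C j ∈ Set.range B) :
    |(Matrix.of B).det| = |(Matrix.of C).det| := by
  choose σ hσ using h
  have hinj : Function.Injective σ := fun a b hab => hC (by rw [← hσ a, ← hσ b, hab])
  let e : Equiv.Perm (Fin d) := Equiv.ofBijective σ (Finite.injective_iff_bijective.mp hinj)
  have hCe : Matrix.of C = (Matrix.of B).submatrix e (Equiv.refl _) := by
    ext j k
    exact (congrFun (hσ j) k).symm
  rw [hCe, Matrix.abs_det_submatrix_equiv_equiv]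

/-- Volume relation between a facet and its neighboring facet: with
`vol(F) = (1/d!)·|det A_F|`, one has `vol(N(F,v)) = |⟨u_F^v, n(F,v)⟩| · vol(F)`. -/
theorem vol_neighbor_facet {d : ℕ} (P : Polytope d) (hsimp : P.IsSimplicial)
    (h0 : 0 ∈ interior P.carrier)
    (F : Set (Fin d → ℝ)) (hF : P.IsFacet F)
    (v : Fin d → ℝ) (hv : v ∈ P.vertsOn F)
    (F' : Set (Fin d → ℝ)) (hF' : P.IsNeighborFacet F v F')
    (y : Fin d → ℝ) (hy : y ∈ P.vertsOn F') (hyF : y ∉ F)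
    (uFv : Fin d → ℝ) (huFv : P.IsDualBasisElt F v uFv)
    (vA : Fin d → (Fin d → ℝ)) (hvAinj : Function.Injective vA)
    (hvA : Set.range vA = P.vertsOn F)
    (vB : Fin d → (Fin d → ℝ)) (hvBinj : Function.Injective vB)
    (hvB : Set.range vB = P.vertsOn F') :
    (d.factorial : ℝ)⁻¹ * |(Matrix.of vB).det| =
      |pairing uFv y| * ((d.factorial : ℝ)⁻¹ * |(Matrix.of vA).det|) := by
  obtain ⟨i, rfl⟩ : v ∈ Set.range vA := hvA ▸ hv
  have hmem : ∀ j, vA j ∈ P.vertsOn F := fun j => hvA ▸ Set.mem_range_self j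
  have hu : (Matrix.of vA).mulVec uFv = Pi.single i 1 := by
    ext j
    have hj : (Matrix.of vA).mulVec uFv j = pairing uFv (vA j) := by
      simp [Matrix.mulVec, dotProduct, pairing, mul_comm]
    rw [hj]
    rcases eq_or_ne j i with rfl | hji
    · simpa using huFv.1
    · simpa [hji] using huFv.2 _ (hmem j) (hvAinj.ne hji)
  have hyA : ∀ j, vA j ≠ y := fun j hj => hyF (hj ▸ (hmem j).2)
  have hinj : Function.Injective (Function.update vA i y) := by
    intro a b hab
    by_cases ha : a = i <;> by_cases hb : b = i
    · rw [ha, hb]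
    · simp only [ha, Function.update_self, Function.update_of_ne hb] at hab
      exact absurd hab.symm (hyA b)
    · simp only [hb, Function.update_self, Function.update_of_ne ha] at hab
      exact absurd hab (hyA a)
    · simp only [Function.update_of_ne ha, Function.update_of_ne hb] at hab
      exact hvAinj hab
  have hrange : ∀ j, Function.update vA i y j ∈ Set.range vB := by
    intro j
    rw [hvB]
    by_cases hj : j = i
    · simpa [hj] using hy
    · rw [Function.update_of_ne hj]
      exact ⟨(hmem j).1, hF'.2.2 _ (hmem j) (hvAinj.ne hj)⟩
  have hdet := det_updateRow_of_mulVec_eq_single (Matrix.of vA) i uFv y hu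
  rw [abs_det_eq_of_forall_mem_range vB _ hinj hrange]
  change (Matrix.of (Function.update vA i y)).det = _ at hdet
  rw [hdet, abs_mul]
  ring
end
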